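/- arXiv:2208.05422 — 2 statements merged into one kernel-verified Lean document; each statement's English description precedes it below -/
import Mathlib

section
/- Assume char(F_q(t)) > 3 and let F(x) = Σ_{i=1}^6 F_i x_i^3 be a non-singular diagonal cubic form over F_q[t] in n = 6 variables, with dual form F*(c) = (∏F_i)^{2^{n−2}} ∏_± ((F_1^{-1}c_1^3)^{1/2} ± … ± (F_6^{-1}c_6^3)^{1/2}). Then the number of c ∈ F_q[t]^6 with F*(c) = 0 and |c| ≤ Ĉ is O_ε(Ĉ^{3+ε}). -/
open scoped Classical
open MeasureTheory

noncomputable section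

variable (Fq : Type) [Field Fq] [Fintype Fq]

/-- The absolute value on `K_∞ = F_q((t⁻¹))`, realised as formal Laurent series in
`X = t⁻¹`: for `α = Σ_{i ≤ M} α_i t^i` with `α_M ≠ 0` we have `|α| = q^M = q^(-order α)`. -/
def fabs (x : LaurentSeries Fq) : ℝ :=
  if x = 0 then 0 else (Fintype.card Fq : ℝ) ^ (-x.order : ℤ)

/-- The embedding of `O = F_q[t]` into `K_∞`, sending `t` to `X⁻¹`. -/
def polC (x : Polynomial Fq) : LaurentSeries Fq :=
  Polynomial.aeval (HahnSeries.single (-1 : ℤ) (1 : Fq)) x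

/-- `|x| = q^(deg x)` for `x ∈ F_q[t]` (with `|0| = 0`). -/
def fabsP (x : Polynomial Fq) : ℝ :=
  if x = 0 then 0 else (Fintype.card Fq : ℝ) ^ x.natDegree

/-- The standard additive character `ψ(α) = e(Tr_{F_q/F_p}(α_{-1})/p)` of `K_∞`,
where `α_{-1}` is the coefficient of `t⁻¹` in the Laurent expansion of `α`. -/
def psi (p : ℕ) [CharP Fq p] (α : LaurentSeries Fq) : ℂ :=
  letI := ZMod.algebra Fq p
  Complex.exp (2 * Real.pi * Complex.I *
    ((Algebra.trace (ZMod p) Fq (α.coeff 1)).val : ℂ) / p)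

/-- The canonical map `F_q[t] → K = F_q(t) → K̄`. -/
def amap (x : Polynomial Fq) : AlgebraicClosure (RatFunc Fq) :=
  algebraMap (RatFunc Fq) (AlgebraicClosure (RatFunc Fq))
    (algebraMap (Polynomial Fq) (RatFunc Fq) x)

/-!
Over a normal extension of characteristic `≠ 2`, the Galois group acts on a square root `s` of an
element of the base field through a quadratic character, and two square roots have the same
character exactly when their product lies in the base field. Independence of characters therefore
splits a relation `∑ sᵢ = 0` into one relation for each square class of the `sᵢ²`.

Fix which of the `Fᵢ⁻¹ cᵢᵈ` share a square class and choose the `cᵢ` in order. In a class of size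
`m` (necessarily `m ≥ 2`), the first entry has `O(Ĉ)` values. Each later one lies in a known square
class, `Fᵢ cᵢ = g f²`, leaving `O(Ĉ^{1/2})` values, and the last one is determined up to `O(1)`
possibilities by the vanishing of the sum over the class. Each class thus contributes
`Ĉ^{1 + (m - 2)/2} = Ĉ^{m/2}`, so that there are `O(Ĉ^{n/2})` zeros in total.
-/

open Polynomial

section SquareClasses

variable {G : Type*} [CommGroupWithZero G] {x y z : G}

/-- `x` and `y` define the same element of `Gˣ / (Gˣ)²`. Zero is related to nothing, so this is only
a partial equivalence relation on `G`. -/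
def SameSquareClass (x y : G) : Prop :=
  x ≠ 0 ∧ y ≠ 0 ∧ IsSquare (x * y)

theorem sameSquareClass_self (hx : x ≠ 0) : SameSquareClass x x :=
  ⟨hx, hx, .mul_self x⟩

theorem SameSquareClass.symm (h : SameSquareClass x y) : SameSquareClass y x :=
  ⟨h.2.1, h.1, mul_comm x y ▸ h.2.2⟩

theorem SameSquareClass.trans (hxy : SameSquareClass x y) (hyz : SameSquareClass y z) :
    SameSquareClass x z := by
  obtain ⟨hx, hy, hsq⟩ := hxy
  obtain ⟨-, hz, hsq'⟩ := hyz
  refine ⟨hx, hz, ?_⟩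
  have hxz : x * z = x * y * (y * z) / (y * y) := by field_simp
  exact hxz ▸ (hsq.mul hsq').div (.mul_self y)

end SquareClasses

section QuadraticCharacters

variable {K L : Type*} [Field K] [Field L] [Algebra K L] {y z : L} {a b : K}

theorem exists_algEquiv_apply_eq_neg [Normal K L] (hy : y ^ 2 = algebraMap K L a)
    (ha : ¬ IsSquare a) : ∃ σ : L ≃ₐ[K] L, σ y = -y := by
  have hirr : Irreducible (X ^ 2 - C a) :=
    (X_pow_sub_C_irreducible_iff_of_prime Nat.prime_two).2
      fun r hr => ha ((isSquare_iff_exists_sq a).2 ⟨r, hr.symm⟩)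
  have hmin (w : L) (hw : w ^ 2 = algebraMap K L a) : X ^ 2 - C a = minpoly K w :=
    minpoly.eq_of_irreducible_of_monic hirr (by simp [hw]) (monic_X_pow_sub_C a two_ne_zero)
  exact isConjRoot_iff_exists_algEquiv.1 ((hmin (-y) (by rwa [neg_sq])).symm.trans (hmin y hy))

theorem algEquiv_apply_eq_or_eq_neg (hy : y ^ 2 = algebraMap K L a) (σ : L ≃ₐ[K] L) :
    σ y = y ∨ σ y = -y := by
  rw [← sq_eq_sq_iff_eq_or_eq_neg, ← map_pow, hy, σ.commutes]

theorem exists_monoidHom_forall_apply_eq_mul (hy : y ^ 2 = algebraMap K L a) :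
    ∃ χ : (L ≃ₐ[K] L) →* L, ∀ σ, σ y = χ σ * y := by
  rcases eq_or_ne y 0 with rfl | hy0
  · exact ⟨1, by simp⟩
  refine ⟨⟨⟨fun σ => σ y / y, by simp [hy0]⟩, fun σ τ => ?_⟩, fun σ => by simp [hy0]⟩
  rcases algEquiv_apply_eq_or_eq_neg hy τ with hτ | hτ <;> simp [hτ, hy0, neg_div]

theorem monoidHom_sq_eq_one {χ : (L ≃ₐ[K] L) →* L} (hy : y ^ 2 = algebraMap K L a) (hy0 : y ≠ 0)
    (hχ : ∀ σ, σ y = χ σ * y) (σ : L ≃ₐ[K] L) : χ σ ^ 2 = 1 := by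
  apply mul_right_cancel₀ (pow_ne_zero 2 hy0)
  rw [← mul_pow, ← hχ, ← map_pow, hy, σ.commutes, one_mul]

theorem monoidHom_eq_iff_isSquare_mul [Normal K L] (h2 : (2 : L) ≠ 0)
    {χ ψ : (L ≃ₐ[K] L) →* L} (hy : y ^ 2 = algebraMap K L a) (hz : z ^ 2 = algebraMap K L b)
    (hy0 : y ≠ 0) (hz0 : z ≠ 0) (hχ : ∀ σ, σ y = χ σ * y) (hψ : ∀ σ, σ z = ψ σ * z) :
    χ = ψ ↔ IsSquare (a * b) := by
  have hyz : (y * z) ^ 2 = algebraMap K L (a * b) := by rw [mul_pow, hy, hz, map_mul]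
  have hyz0 : y * z ≠ 0 := mul_ne_zero hy0 hz0
  have hσ (σ : L ≃ₐ[K] L) : σ (y * z) = χ σ * ψ σ * (y * z) := by rw [map_mul, hχ, hψ]; ring
  refine ⟨fun h => ?_, ?_⟩
  · by_contra hab
    obtain ⟨σ, hneg⟩ := exists_algEquiv_apply_eq_neg hyz hab
    have hfix : σ (y * z) = y * z := by
      rw [hσ, ← h, ← sq, monoidHom_sq_eq_one hy hy0 hχ, one_mul]
    exact mul_ne_zero h2 hyz0 (by linear_combination hneg - hfix)
  · rintro ⟨r, hr⟩
    have hmem : y * z = algebraMap K L r ∨ y * z = algebraMap K L (-r) := by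
      rw [map_neg, ← sq_eq_sq_iff_eq_or_eq_neg, hyz, hr, map_mul, sq]
    ext σ
    have hfix : σ (y * z) = y * z := by
      rcases hmem with h | h <;> rw [h, σ.commutes]
    have hmul : χ σ * ψ σ = 1 := mul_right_cancel₀ hyz0 (by rw [← hσ, hfix, one_mul])
    linear_combination ψ σ * monoidHom_sq_eq_one hy hy0 hχ σ - χ σ * hmul

/-- In the relation `∑ χᵢ sᵢ = 0` of functions of `σ`, Dedekind's independence of characters makes
the total coefficient of each character vanish. -/
theorem sum_filter_monoidHom_eq_zero {ι : Type*} [Fintype ι] {s : ι → L}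
    {χ : ι → (L ≃ₐ[K] L) →* L} (hχ : ∀ i σ, σ (s i) = χ i σ * s i) (hsum : ∑ i, s i = 0) (i : ι) :
    ∑ j with χ j = χ i, s j = 0 := by
  refine linearIndependent_iff'.1 (linearIndependent_monoidHom (L ≃ₐ[K] L) L)
    (Finset.univ.image χ) (fun ψ => ∑ j with χ j = ψ, s j) ?_ (χ i)
    (Finset.mem_image_of_mem χ (Finset.mem_univ i))
  ext σ
  calc (∑ ψ ∈ Finset.univ.image χ, (∑ j with χ j = ψ, s j) • ⇑ψ) σ
      = ∑ ψ ∈ Finset.univ.image χ, ∑ j with χ j = ψ, χ j σ * s j := by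
        simp only [Finset.sum_apply, Pi.smul_apply, smul_eq_mul, Finset.sum_mul]
        refine Finset.sum_congr rfl fun ψ _ => Finset.sum_congr rfl fun j hj => ?_
        rw [(Finset.mem_filter.1 hj).2, mul_comm]
    _ = ∑ j, χ j σ * s j :=
        Finset.sum_fiberwise_of_maps_to (fun j hj => Finset.mem_image_of_mem χ hj) _
    _ = σ (∑ j, s j) := by simp only [map_sum, hχ]
    _ = 0 := by rw [hsum, map_zero]

theorem sum_filter_sameSquareClass_eq_zero [Normal K L] (h2 : (2 : L) ≠ 0) {ι : Type*} [Fintype ι]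
    {s : ι → L} {b : ι → K} (hs : ∀ i, s i ^ 2 = algebraMap K L (b i)) (hsum : ∑ i, s i = 0)
    (i : ι) : ∑ j with SameSquareClass (b i) (b j), s j = 0 := by
  have hb (j : ι) : b j = 0 ↔ s j = 0 := by
    rw [← map_eq_zero (algebraMap K L), ← hs, sq_eq_zero_iff]
  choose χ hχ using fun j => exists_monoidHom_forall_apply_eq_mul (hs j)
  by_cases hi : b i = 0
  · simp [SameSquareClass, hi]
  rw [← sum_filter_monoidHom_eq_zero hχ hsum i, Finset.sum_filter, Finset.sum_filter]
  refine Finset.sum_congr rfl fun j _ => ?_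
  by_cases hj : b j = 0
  · simp [(hb j).1 hj]
  have hiff : SameSquareClass (b i) (b j) ↔ χ j = χ i := by
    rw [eq_comm, monoidHom_eq_iff_isSquare_mul h2 (hs i) (hs j) (mt (hb i).2 hi)
      (mt (hb j).2 hj) (hχ i) (hχ j)]
    exact ⟨fun h => h.2.2, fun h => ⟨hi, hj, h⟩⟩
  simp only [hiff]

theorem eq_neg_sum_filter_lt_of_forall_gt_not_sameSquareClass [Normal K L] (h2 : (2 : L) ≠ 0)
    {ι : Type*} [Fintype ι] [LinearOrder ι] {s : ι → L} {b : ι → K}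
    (hs : ∀ i, s i ^ 2 = algebraMap K L (b i)) (hsum : ∑ i, s i = 0) {i : ι}
    (hlast : ∀ j, i < j → ¬ SameSquareClass (b i) (b j)) :
    s i = -∑ j with j < i ∧ SameSquareClass (b i) (b j), s j := by
  rw [eq_neg_iff_add_eq_zero, ← sum_filter_sameSquareClass_eq_zero h2 hs hsum i,
    ← Fintype.sum_ite_eq' i s, Finset.sum_filter, Finset.sum_filter, ← Finset.sum_add_distrib]
  refine Finset.sum_congr rfl fun j _ => ?_
  rcases lt_trichotomy j i with hji | rfl | hij
  · simp [hji, hji.ne]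
  · by_cases hj : b j = 0
    · have hsj : s j = 0 := by simpa [hj] using hs j
      simp [hsj]
    · simp [sameSquareClass_self hj]
  · simp [hij.not_gt, hij.ne', hlast j hij]

end QuadraticCharacters

section SignedSums

variable {L ι : Type*} [CommRing L] [Fintype ι]

/-- The values of `∑ i ∈ J, ± s i` over all choices of signs: what a sum of square roots can be
when only the squares `s i ^ 2` are known. -/
def signedSums (J : Finset ι) (s : ι → L) : Finset L :=
  Finset.univ.image fun u : ι → ℤˣ => ∑ i ∈ J, u i • s i

theorem card_signedSums_le (J : Finset ι) (s : ι → L) :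
    (signedSums J s).card ≤ 2 ^ Fintype.card ι :=
  Finset.card_image_le.trans_eq (by simp [Fintype.card_units_int])

theorem sum_mem_signedSums [NoZeroDivisors L] {J : Finset ι} {s s' : ι → L}
    (h : ∀ i ∈ J, s' i ^ 2 = s i ^ 2) : ∑ i ∈ J, s' i ∈ signedSums J s := by
  have hsign (i : ι) : ∃ u : ℤˣ, i ∈ J → u • s i = s' i := by
    by_cases hi : i ∈ J
    · rcases sq_eq_sq_iff_eq_or_eq_neg.1 (h i hi) with hs | hs
      · exact ⟨1, fun _ => by simp [hs]⟩
      · exact ⟨-1, fun _ => by simp [hs, Units.smul_def]⟩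
    · exact ⟨1, fun hi' => absurd hi' hi⟩
  choose u hu using hsign
  exact Finset.mem_image.2 ⟨u, Finset.mem_univ u, Finset.sum_congr rfl hu⟩

end SignedSums

section SuccessiveChoices

variable {α : Type*} {n : ℕ}

/-- The values at `i` of the elements of `S` that agree with `c` before `i`: the choices left for
the `i`-th entry when the tuples in `S` are built one entry at a time. -/
def nextValues (S : Finset (Fin n → α)) (c : Fin n → α) (i : Fin n) : Finset α :=
  {c' ∈ S | ∀ j < i, c' j = c j}.image (· i)

theorem mem_nextValues {S : Finset (Fin n → α)} {c : Fin n → α} {i : Fin n} {x : α} :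
    x ∈ nextValues S c i ↔ ∃ c' ∈ S, (∀ j < i, c' j = c j) ∧ c' i = x := by
  simp [nextValues, and_assoc]

theorem nextValues_image_init_subset (S : Finset (Fin (n + 1) → α)) (c : Fin (n + 1) → α)
    (i : Fin n) : nextValues (S.image Fin.init) (Fin.init c) i ⊆ nextValues S c i.castSucc := by
  intro x hx
  obtain ⟨_, hT, hagree, rfl⟩ := mem_nextValues.1 hx
  obtain ⟨c', hc', rfl⟩ := Finset.mem_image.1 hT
  refine mem_nextValues.2 ⟨c', hc', fun j hj => ?_, rfl⟩
  exact hagree (j.castLT ((Fin.lt_def.1 hj).trans i.2)) hj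

theorem card_filter_init_eq_le_card_nextValues (S : Finset (Fin (n + 1) → α))
    (c : Fin (n + 1) → α) :
    {c' ∈ S | Fin.init c' = (Fin.init c : Fin n → α)}.card ≤
      (nextValues S c (Fin.last n)).card := by
  refine Finset.card_le_card_of_injOn (· (Fin.last n)) (fun c' hc' => ?_) fun a ha b hb hab => ?_
  · obtain ⟨hS, hinit⟩ := Finset.mem_filter.1 hc'
    exact mem_nextValues.2 ⟨c', hS, fun j hj => congrFun hinit (j.castLT hj), rfl⟩
  · have hinit := (Finset.mem_filter.1 ha).2.trans (Finset.mem_filter.1 hb).2.symm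
    rw [← Fin.snoc_init_self a, ← Fin.snoc_init_self b, hinit]
    exact congrArg _ hab

theorem card_le_prod_of_card_nextValues_le (S : Finset (Fin n → α)) (N : Fin n → ℕ)
    (hN : ∀ c ∈ S, ∀ i, (nextValues S c i).card ≤ N i) : S.card ≤ ∏ i, N i := by
  induction n with
  | zero => simpa using Finset.card_le_one_of_subsingleton S
  | succ n ih =>
    have hinit : (S.image Fin.init).card ≤ ∏ i : Fin n, N i.castSucc := by
      refine ih _ _ fun b hb i => ?_
      obtain ⟨c, hc, rfl⟩ := Finset.mem_image.1 hb
      exact (Finset.card_le_card (nextValues_image_init_subset S c i)).trans (hN c hc _)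
    have hlast : ∀ b ∈ S.image (Fin.init : _ → Fin n → α),
        {c ∈ S | Fin.init c = b}.card ≤ N (Fin.last n) := by
      intro b hb
      obtain ⟨c, hc, rfl⟩ := Finset.mem_image.1 hb
      exact (card_filter_init_eq_le_card_nextValues S c).trans (hN c hc _)
    calc S.card ≤ N (Fin.last n) * (S.image Fin.init).card :=
          Finset.card_le_mul_card_image S _ hlast
      _ ≤ N (Fin.last n) * ∏ i : Fin n, N i.castSucc := Nat.mul_le_mul_left _ hinit
      _ = ∏ i, N i := by rw [Fin.prod_univ_castSucc, mul_comm]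

end SuccessiveChoices

section ChoiceWeights

variable {ι : Type*} [LinearOrder ι]

/-- Twice the exponent of `Ĉ` in the number of choices for the `i`-th entry once the previous ones
are chosen, when `R` says which entries share a square class: `0` for the last element of a class
and for an element of no class, otherwise `2` for the first one and `1` for the others. -/
def choiceWeight (R : ι → ι → Prop) (i : ι) : ℕ :=
  if ∃ j, i < j ∧ R i j then if ∃ j, j < i ∧ R i j then 1 else 2 else 0

variable [Fintype ι] {R : ι → ι → Prop}

theorem card_first_not_last_le_card_last (hsymm : ∀ i j, R i j → R j i)
    (htrans : ∀ i j k, R i j → R j k → R i k) :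
    (Finset.univ.filter fun i => (∃ j, i < j ∧ R i j) ∧ ¬ ∃ j, j < i ∧ R i j).card ≤
      (Finset.univ.filter fun i => ¬ ∃ j, i < j ∧ R i j).card := by
  have hmax (i : ι) (hi : (∃ j, i < j ∧ R i j) ∧ ¬ ∃ j, j < i ∧ R i j) :
      ∃ m, R i m ∧ ∀ j, R i j → j ≤ m := by
    obtain ⟨⟨j, -, hj⟩, -⟩ := hi
    obtain ⟨m, hm, hle⟩ := (Finset.univ.filter (R i)).exists_max_image id ⟨j, by simpa using hj⟩
    exact ⟨m, by simpa using hm, by simpa using hle⟩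
  choose! g hgR hgmax using hmax
  refine Finset.card_le_card_of_injOn g (fun i hi => ?_) fun i hi i' hi' hg => ?_
  · simp only [Finset.coe_filter, Finset.mem_univ, true_and, Set.mem_ofPred_eq] at hi ⊢
    rintro ⟨j, hlt, hj⟩
    exact (hgmax i hi j (htrans _ _ _ (hgR i hi) hj)).not_gt hlt
  · simp only [Finset.coe_filter, Finset.mem_univ, true_and, Set.mem_ofPred_eq] at hi hi'
    have hR : R i i' := htrans _ _ _ (hgR i hi) (hg ▸ hsymm _ _ (hgR i' hi'))
    exact le_antisymm (not_lt.1 fun h => hi.2 ⟨i', h, hR⟩)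
      (not_lt.1 fun h => hi'.2 ⟨i, h, hsymm _ _ hR⟩)

theorem sum_choiceWeight_le_card (hsymm : ∀ i j, R i j → R j i)
    (htrans : ∀ i j k, R i j → R j k → R i k) : ∑ i, choiceWeight R i ≤ Fintype.card ι := by
  have hsplit : ∑ i, choiceWeight R i + (Finset.univ.filter fun i => ¬ ∃ j, i < j ∧ R i j).card =
      Fintype.card ι +
        (Finset.univ.filter fun i => (∃ j, i < j ∧ R i j) ∧ ¬ ∃ j, j < i ∧ R i j).card := by
    rw [Finset.card_filter, Finset.card_filter, Fintype.card_eq_sum_ones,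
      ← Finset.sum_add_distrib, ← Finset.sum_add_distrib]
    refine Finset.sum_congr rfl fun i _ => ?_
    by_cases hlater : ∃ j, i < j ∧ R i j <;> by_cases hearlier : ∃ j, j < i ∧ R i j <;>
      simp [choiceWeight, hlater, hearlier]
  have := card_first_not_last_le_card_last hsymm htrans
  omega

end ChoiceWeights

section SquareClassCounting

theorem exists_eq_squarefree_mul_sq {A : Type*} [CommMonoidWithZero A] [IsCancelMulZero A]
    [WfDvdMonoid A] {a : A} (ha : a ≠ 0) : ∃ g e, Squarefree g ∧ a = g * e ^ 2 := by
  induction a using (wellFounded_dvdNotUnit (α := A)).induction with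
  | _ a ih =>
  by_cases hsf : Squarefree a
  · exact ⟨a, 1, hsf, by simp⟩
  obtain ⟨p, ⟨b, rfl⟩, hp⟩ : ∃ p, p * p ∣ a ∧ ¬ IsUnit p := by simpa [Squarefree] using hsf
  have hb : b ≠ 0 := right_ne_zero_of_mul ha
  obtain ⟨g, e, hg, rfl⟩ :=
    ih b ⟨hb, p * p, fun h => hp (isUnit_of_mul_isUnit_left h), mul_comm _ _⟩ hb
  exact ⟨g, p * e, hg, by rw [mul_pow, sq p, mul_left_comm]⟩

theorem exists_forall_isSquare_mul_imp_eq_mul_sq {A : Type*} [CommRing A] [IsDomain A]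
    [UniqueFactorizationMonoid A] {a : A} (ha : a ≠ 0) :
    ∃ g ≠ 0, ∀ x, IsSquare (a * x) → ∃ f, x = g * f ^ 2 := by
  obtain ⟨g, e, hg, rfl⟩ := exists_eq_squarefree_mul_sq ha
  have hg0 : g ≠ 0 := left_ne_zero_of_mul ha
  have he0 : e ^ 2 ≠ 0 := right_ne_zero_of_mul ha
  refine ⟨g, hg0, fun x ⟨y, hy⟩ => ?_⟩
  obtain ⟨z, rfl⟩ : e ∣ y :=
    (IsIntegrallyClosed.pow_dvd_pow_iff two_ne_zero).1 ⟨g * x, by linear_combination -hy⟩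
  have hgx : g * x = z ^ 2 := mul_left_cancel₀ he0 (by linear_combination hy)
  obtain ⟨f, rfl⟩ : g ∣ z := (hg.dvd_pow_iff_dvd two_ne_zero).1 ⟨x, hgx.symm⟩
  exact ⟨f, mul_left_cancel₀ hg0 (by linear_combination hgx)⟩

theorem isSquare_of_isSquare_algebraMap {A K : Type*} [CommRing A] [IsDomain A]
    [IsIntegrallyClosed A] [Field K] [Algebra A K] [IsFractionRing A K] {x : A}
    (hx : IsSquare (algebraMap A K x)) : IsSquare x := by
  obtain ⟨r, hr⟩ := hx
  obtain ⟨y, rfl⟩ := IsIntegrallyClosed.exists_algebraMap_eq_of_isIntegral_pow (R := A)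
    (K := K) (x := r) two_pos (by rw [sq, ← hr]; exact isIntegral_algebraMap)
  exact ⟨y, IsFractionRing.injective A K (by rw [hr, map_mul])⟩

theorem card_le_mul_card_image_pow {A : Type*} [CommRing A] [IsDomain A] {d : ℕ} (hd : 0 < d)
    (S : Finset A) : S.card ≤ d * (S.image (· ^ d)).card := by
  refine Finset.card_le_mul_card_image S d fun v _ => ?_
  calc {x ∈ S | x ^ d = v}.card ≤ (nthRoots d v).toFinset.card :=
        Finset.card_le_card fun x hx => by
          simpa [mem_nthRoots hd] using (Finset.mem_filter.1 hx).2
    _ ≤ d := (Multiset.toFinset_card_le _).trans (card_nthRoots d v)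

variable (𝔽 : Type*) [Field 𝔽] [Fintype 𝔽]

/-- The polynomials of degree at most `C`, as a finite set. -/
def polysOfNatDegreeLE (C : ℕ) : Finset 𝔽[X] :=
  Finset.univ.image fun a : Fin (C + 1) → 𝔽 => ((degreeLTEquiv 𝔽 (C + 1)).symm a : 𝔽[X])

variable {𝔽}

theorem mem_polysOfNatDegreeLE {C : ℕ} {f : 𝔽[X]} :
    f ∈ polysOfNatDegreeLE 𝔽 C ↔ f.natDegree ≤ C := by
  rw [natDegree_le_iff_degree_le, ← mem_degreeLE, ← degreeLT_succ_eq_degreeLE]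
  refine ⟨fun hf => ?_, fun hf => ?_⟩
  · obtain ⟨a, -, rfl⟩ := Finset.mem_image.1 hf
    exact Subtype.prop _
  · exact Finset.mem_image.2 ⟨degreeLTEquiv 𝔽 (C + 1) ⟨f, hf⟩, Finset.mem_univ _, by simp⟩

theorem card_polysOfNatDegreeLE_le (C : ℕ) :
    (polysOfNatDegreeLE 𝔽 C).card ≤ Fintype.card 𝔽 ^ (C + 1) :=
  Finset.card_image_le.trans_eq (by simp)

theorem card_le_of_forall_isSquare_mul {C : ℕ} {a : 𝔽[X]} (ha : a ≠ 0) (S : Finset 𝔽[X])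
    (hdeg : ∀ x ∈ S, x.natDegree ≤ C) (hsq : ∀ x ∈ S, IsSquare (a * x)) :
    S.card ≤ Fintype.card 𝔽 ^ (C / 2 + 1) := by
  obtain ⟨g, hg, hmul⟩ := exists_forall_isSquare_mul_imp_eq_mul_sq ha
  have hsub : S ⊆ (polysOfNatDegreeLE 𝔽 (C / 2)).image (g * · ^ 2) := by
    intro x hx
    obtain ⟨f, rfl⟩ := hmul x (hsq x hx)
    refine Finset.mem_image_of_mem _ (mem_polysOfNatDegreeLE.2 ?_)
    rcases eq_or_ne f 0 with rfl | hf
    · simp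
    have hgf := hdeg _ hx
    rw [natDegree_mul hg (pow_ne_zero 2 hf), natDegree_pow] at hgf
    omega
  exact (Finset.card_le_card hsub).trans
    (Finset.card_image_le.trans (card_polysOfNatDegreeLE_le (C / 2)))

end SquareClassCounting

section DualFormZeros

variable {A K L ι : Type*} [CommRing A] [Field K] [Algebra A K] [Field L] [Algebra K L]
  {d : ℕ} {F c : ι → A} {i j : ι}

variable (K) in
/-- The quantity `Fᵢ⁻¹ cᵢᵈ` whose square roots occur in the dual form; `d = 3` for a cubic form. -/
def dualTerm (d : ℕ) (F c : ι → A) (i : ι) : K :=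
  (algebraMap A K (F i))⁻¹ * algebraMap A K (c i) ^ d

variable (K L) in
/-- `F*(c) = 0`: some choice in `L` of square roots of the `Fᵢ⁻¹ cᵢᵈ` sums to zero. -/
def IsDualFormZero [Fintype ι] (d : ℕ) (F c : ι → A) : Prop :=
  ∃ s : ι → L, (∀ i, s i ^ 2 = algebraMap K L (dualTerm K d F c i)) ∧ ∑ i, s i = 0

variable (K) in
/-- The relation recording which of the `Fᵢ⁻¹ cᵢᵈ` are nonzero and share a square class in `K`. -/
def squareClassPattern (d : ℕ) (F c : ι → A) (i j : ι) : Prop :=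
  SameSquareClass (dualTerm K d F c i) (dualTerm K d F c j)

theorem ne_zero_of_dualTerm_ne_zero (hd : d ≠ 0) (h : dualTerm K d F c i ≠ 0) : c i ≠ 0 := by
  intro hc
  simp [dualTerm, hc, hd] at h

section FractionField

variable [IsFractionRing A K]

theorem isSquare_mul_of_squareClassPattern [IsDomain A] [IsIntegrallyClosed A] (hd : Odd d)
    (hFi : F i ≠ 0) (hFj : F j ≠ 0) (h : squareClassPattern K d F c i j) :
    IsSquare (F i * c i * (F j * c j)) := by
  obtain ⟨hi, hj, hsq⟩ := h
  obtain ⟨l, rfl⟩ := hd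
  have hinj := IsFractionRing.injective A K
  have hFi' : algebraMap A K (F i) ≠ 0 := (map_ne_zero_iff _ hinj).2 hFi
  have hFj' : algebraMap A K (F j) ≠ 0 := (map_ne_zero_iff _ hinj).2 hFj
  have hci : algebraMap A K (c i) ≠ 0 :=
    (map_ne_zero_iff _ hinj).2 (ne_zero_of_dualTerm_ne_zero (by omega) hi)
  have hcj : algebraMap A K (c j) ≠ 0 :=
    (map_ne_zero_iff _ hinj).2 (ne_zero_of_dualTerm_ne_zero (by omega) hj)
  have heq : algebraMap A K (F i * c i * (F j * c j)) =
      dualTerm K (2 * l + 1) F c i * dualTerm K (2 * l + 1) F c j *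
        (algebraMap A K (F i * F j) / algebraMap A K (c i * c j) ^ l) ^ 2 := by
    simp only [dualTerm, map_mul]
    field_simp
    ring
  apply isSquare_of_isSquare_algebraMap (K := K)
  rw [heq]
  exact hsq.mul (.sq _)

theorem map_pow_mem_image_signedSums [Normal K L] (h2 : (2 : L) ≠ 0) [Fintype ι] [LinearOrder ι]
    {c' : ι → A} {s s' : ι → L} (hFi : F i ≠ 0)
    (hs : ∀ j, s j ^ 2 = algebraMap K L (dualTerm K d F c j))
    (hs' : ∀ j, s' j ^ 2 = algebraMap K L (dualTerm K d F c' j)) (hsum' : ∑ j, s' j = 0)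
    (hagree : ∀ j < i, c' j = c j) (hlast : ∀ j, i < j → ¬ squareClassPattern K d F c' i j) :
    algebraMap K L (algebraMap A K (c' i ^ d)) ∈
      (signedSums {j | j < i ∧ squareClassPattern K d F c' i j} s).image
        (algebraMap K L (algebraMap A K (F i)) * · ^ 2) := by
  have hs'i : s' i = -∑ j with j < i ∧ squareClassPattern K d F c' i j, s' j :=
    eq_neg_sum_filter_lt_of_forall_gt_not_sameSquareClass h2 hs' hsum' hlast
  refine Finset.mem_image.2 ⟨_, sum_mem_signedSums (s' := s') fun j hj => ?_, ?_⟩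
  · rw [hs, hs', dualTerm, dualTerm, hagree j (Finset.mem_filter.1 hj).2.1]
  · have hFK : algebraMap A K (F i) ≠ 0 :=
      (map_ne_zero_iff _ (IsFractionRing.injective A K)).2 hFi
    rw [← neg_sq, ← hs'i, hs', ← map_mul, dualTerm, mul_inv_cancel_left₀ hFK,
      ← map_pow (algebraMap A K)]

theorem card_nextValues_le_of_forall_gt_not [IsDomain A] [Normal K L] (h2 : (2 : L) ≠ 0)
    (hd : 0 < d) {n : ℕ} {F c : Fin n → A} {R : Fin n → Fin n → Prop} {S : Finset (Fin n → A)}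
    (hzero : ∀ c ∈ S, IsDualFormZero K L d F c) (hR : ∀ c ∈ S, squareClassPattern K d F c = R)
    (hc : c ∈ S) {i : Fin n} (hFi : F i ≠ 0) (hlast : ∀ j, i < j → ¬ R i j) :
    (nextValues S c i).card ≤ d * 2 ^ n := by
  obtain ⟨s, hs, -⟩ := hzero c hc
  set V := signedSums {j | j < i ∧ R i j} s
  set φ : A →+* L := (algebraMap K L).comp (algebraMap A K)
  have hφ : Function.Injective φ := (algebraMap K L).injective.comp (IsFractionRing.injective A K)
  have hsub : ((nextValues S c i).image (· ^ d)).image φ ⊆ V.image (φ (F i) * · ^ 2) := by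
    rw [Finset.image_image]
    intro y hy
    obtain ⟨x, hx, rfl⟩ := Finset.mem_image.1 hy
    obtain ⟨c', hc', hagree, rfl⟩ := mem_nextValues.1 hx
    obtain ⟨s', hs', hsum'⟩ := hzero c' hc'
    obtain rfl := hR c' hc'
    exact map_pow_mem_image_signedSums h2 hFi hs hs' hsum' hagree hlast
  calc (nextValues S c i).card ≤ d * ((nextValues S c i).image (· ^ d)).card :=
        card_le_mul_card_image_pow hd _
    _ = d * (((nextValues S c i).image (· ^ d)).image φ).card := by
        rw [Finset.card_image_of_injective _ hφ]
    _ ≤ d * 2 ^ n := by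
        refine Nat.mul_le_mul_left d ((Finset.card_le_card hsub).trans ?_)
        exact Finset.card_image_le.trans ((card_signedSums_le _ s).trans_eq (by simp))

end FractionField

end DualFormZeros

section DualFormCount

variable {𝔽 K L : Type*} [Field 𝔽] [Fintype 𝔽] [Field K] [Algebra 𝔽[X] K] [IsFractionRing 𝔽[X] K]
  [Field L] [Algebra K L] {d n C : ℕ} {F c : Fin n → 𝔽[X]} {R : Fin n → Fin n → Prop}
  {S : Finset (Fin n → 𝔽[X])}

theorem card_nextValues_le_of_natDegree_le (hdeg : ∀ c ∈ S, ∀ i, (c i).natDegree ≤ C)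
    (c : Fin n → 𝔽[X]) (i : Fin n) :
    (nextValues S c i).card ≤ Fintype.card 𝔽 ^ (C + 1) := by
  refine (Finset.card_le_card fun x hx => ?_).trans (card_polysOfNatDegreeLE_le C)
  obtain ⟨c', hc', -, rfl⟩ := mem_nextValues.1 hx
  exact mem_polysOfNatDegreeLE.2 (hdeg c' hc' i)

theorem card_nextValues_le_of_exists_lt (hd : Odd d) (hF : ∀ i, F i ≠ 0)
    (hdeg : ∀ c ∈ S, ∀ i, (c i).natDegree ≤ C) (hR : ∀ c ∈ S, squareClassPattern K d F c = R)
    (hc : c ∈ S) {i : Fin n} (hi : ∃ j, j < i ∧ R i j) :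
    (nextValues S c i).card ≤ Fintype.card 𝔽 ^ (C / 2 + 1) := by
  obtain ⟨j, hji, hj⟩ := hi
  have hcj : c j ≠ 0 := by
    rw [← hR c hc] at hj
    exact ne_zero_of_dualTerm_ne_zero hd.pos.ne' hj.2.1
  refine card_le_of_forall_isSquare_mul
    (mul_ne_zero (hF i) (mul_ne_zero (hF j) hcj)) _ (fun x hx => ?_) fun x hx => ?_
  · obtain ⟨c', hc', -, rfl⟩ := mem_nextValues.1 hx
    exact hdeg c' hc' i
  · obtain ⟨c', hc', hagree, rfl⟩ := mem_nextValues.1 hx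
    rw [← hR c' hc'] at hj
    rw [mul_right_comm, ← hagree j hji]
    exact isSquare_mul_of_squareClassPattern hd (hF i) (hF j) hj

theorem card_nextValues_le [Normal K L] (h2 : (2 : L) ≠ 0) (hd : Odd d) (hF : ∀ i, F i ≠ 0)
    (hdeg : ∀ c ∈ S, ∀ i, (c i).natDegree ≤ C) (hzero : ∀ c ∈ S, IsDualFormZero K L d F c)
    (hR : ∀ c ∈ S, squareClassPattern K d F c = R) (hc : c ∈ S) (i : Fin n) :
    (nextValues S c i).card ≤
      d * 2 ^ n * Fintype.card 𝔽 * Fintype.card 𝔽 ^ (C * choiceWeight R i / 2) := by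
  have hdn : 0 < d * 2 ^ n := Nat.mul_pos hd.pos (by positivity)
  by_cases hlast : ∃ j, i < j ∧ R i j
  · have hbound : (nextValues S c i).card ≤ Fintype.card 𝔽 ^ (C * choiceWeight R i / 2 + 1) := by
      by_cases hfirst : ∃ j, j < i ∧ R i j
      · simpa [choiceWeight, hlast, hfirst] using
          card_nextValues_le_of_exists_lt hd hF hdeg hR hc hfirst
      · simpa [choiceWeight, hlast, hfirst] using card_nextValues_le_of_natDegree_le hdeg c i
    rw [mul_assoc, ← pow_succ']
    exact hbound.trans (Nat.le_mul_of_pos_left _ hdn)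
  · have hbound := card_nextValues_le_of_forall_gt_not h2 hd.pos hzero hR hc (hF i)
      fun j hij hj => hlast ⟨j, hij, hj⟩
    rw [mul_assoc]
    exact hbound.trans (Nat.le_mul_of_pos_right _
      (Nat.mul_pos Fintype.card_pos (Nat.pow_pos Fintype.card_pos)))

theorem card_le_of_squareClassPattern_eq [Normal K L] (h2 : (2 : L) ≠ 0) (hd : Odd d)
    (hF : ∀ i, F i ≠ 0) (hdeg : ∀ c ∈ S, ∀ i, (c i).natDegree ≤ C)
    (hzero : ∀ c ∈ S, IsDualFormZero K L d F c)
    (hR : ∀ c ∈ S, squareClassPattern K d F c = R) :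
    S.card ≤ (d * 2 ^ n * Fintype.card 𝔽) ^ n * Fintype.card 𝔽 ^ (C * n / 2) := by
  rcases S.eq_empty_or_nonempty with rfl | ⟨c, hc⟩
  · simp
  have hw : ∑ i, choiceWeight R i ≤ n := by
    rw [← hR c hc]
    exact (sum_choiceWeight_le_card (R := squareClassPattern K d F c) (fun _ _ h => h.symm)
      fun _ _ _ h h' => h.trans h').trans_eq (Fintype.card_fin n)
  have hexp : ∑ i, C * choiceWeight R i / 2 ≤ C * n / 2 := by
    rw [Nat.le_div_iff_mul_le two_pos, Finset.sum_mul]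
    calc ∑ i, C * choiceWeight R i / 2 * 2 ≤ ∑ i, C * choiceWeight R i :=
          Finset.sum_le_sum fun i _ => Nat.div_mul_le_self _ 2
      _ ≤ C * n := by rw [← Finset.mul_sum]; exact Nat.mul_le_mul_left C hw
  calc S.card
      ≤ ∏ i, d * 2 ^ n * Fintype.card 𝔽 * Fintype.card 𝔽 ^ (C * choiceWeight R i / 2) :=
        card_le_prod_of_card_nextValues_le S _
          fun c hc i => card_nextValues_le h2 hd hF hdeg hzero hR hc i
    _ = (d * 2 ^ n * Fintype.card 𝔽) ^ n *
          Fintype.card 𝔽 ^ ∑ i, C * choiceWeight R i / 2 := by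
        rw [Finset.prod_mul_distrib, Finset.prod_pow_eq_pow_sum, Finset.prod_const,
          Finset.card_univ, Fintype.card_fin]
    _ ≤ _ := Nat.mul_le_mul_left _ (Nat.pow_le_pow_right Fintype.card_pos hexp)

theorem card_le_of_forall_isDualFormZero [Normal K L] (h2 : (2 : L) ≠ 0) (hd : Odd d)
    (hF : ∀ i, F i ≠ 0) (hdeg : ∀ c ∈ S, ∀ i, (c i).natDegree ≤ C)
    (hzero : ∀ c ∈ S, IsDualFormZero K L d F c) :
    S.card ≤ (d * 2 ^ n * Fintype.card 𝔽) ^ n * Fintype.card 𝔽 ^ (C * n / 2) * 2 ^ n ^ 2 := by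
  have hpat : Fintype.card (Fin n → Fin n → Prop) = 2 ^ n ^ 2 := by
    simp [← pow_mul, sq]
  rw [← hpat]
  refine Finset.card_le_mul_card_image_of_maps_to (f := squareClassPattern K d F)
    (fun _ _ => Finset.mem_univ _) _ fun R _ => ?_
  refine card_le_of_squareClassPattern_eq h2 hd hF (fun c hc => ?_) (fun c hc => ?_)
    fun c hc => (Finset.mem_filter.1 hc).2
  · exact hdeg c (Finset.mem_filter.1 hc).1
  · exact hzero c (Finset.mem_filter.1 hc).1

end DualFormCount

theorem fabsP_le_pow_iff {f : Fq[X]} {C : ℕ} :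
    fabsP Fq f ≤ (Fintype.card Fq : ℝ) ^ C ↔ f.natDegree ≤ C := by
  have hq : 1 < (Fintype.card Fq : ℝ) := by exact_mod_cast Fintype.one_lt_card
  rcases eq_or_ne f 0 with rfl | hf
  · simp [fabsP]
  · rw [fabsP, if_neg hf, pow_le_pow_iff_right₀ hq]

theorem pow_mul_div_two_le_rpow {q : ℝ} (hq : 1 ≤ q) (C n : ℕ) :
    q ^ (C * n / 2) ≤ (q ^ C) ^ ((n : ℝ) / 2) := by
  rw [← Real.rpow_natCast, ← Real.rpow_natCast, ← Real.rpow_mul (by positivity)]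
  refine Real.rpow_le_rpow_of_exponent_le hq (Nat.cast_div_le.trans_eq ?_)
  push_cast
  ring

theorem dual_form_count_six_variables_general (hchar : ringChar Fq ≠ 2) {n d : ℕ} (hd : Odd d)
    (F : Fin n → Fq[X]) (hF : ∀ i, F i ≠ 0) :
    ∃ K : ℝ, 0 < K ∧ ∀ C : ℕ,
      (Nat.card {c : Fin n → Fq[X] //
          (∀ i, fabsP Fq (c i) ≤ (Fintype.card Fq : ℝ) ^ C) ∧
          ∃ s : Fin n → AlgebraicClosure (RatFunc Fq),
            (∀ i, s i ^ 2 = (amap Fq (F i))⁻¹ * amap Fq (c i) ^ d) ∧ ∑ i, s i = 0} : ℝ)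
        ≤ K * ((Fintype.card Fq : ℝ) ^ C) ^ ((n : ℝ) / 2) := by
  have hq : 0 < Fintype.card Fq := Fintype.card_pos
  refine ⟨(d * 2 ^ n * Fintype.card Fq) ^ n * 2 ^ n ^ 2, ?_, fun C => ?_⟩
  · have := hd.pos
    positivity
  have h2 : (2 : AlgebraicClosure (RatFunc Fq)) ≠ 0 := by
    rw [← map_ofNat (algebraMap Fq _)]
    exact (_root_.map_ne_zero _).2 (Ring.two_ne_zero hchar)
  set S : Finset (Fin n → Fq[X]) := {c ∈ Fintype.piFinset fun _ => polysOfNatDegreeLE Fq C |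
    IsDualFormZero (RatFunc Fq) (AlgebraicClosure (RatFunc Fq)) d F c}
  have hS {c : Fin n → Fq[X]} : c ∈ S ↔ (∀ i, (c i).natDegree ≤ C) ∧
      IsDualFormZero (RatFunc Fq) (AlgebraicClosure (RatFunc Fq)) d F c := by
    simp [S, mem_polysOfNatDegreeLE]
  rw [Nat.subtype_card S fun c => by
    simp [hS, fabsP_le_pow_iff, IsDualFormZero, dualTerm, amap]]
  have hcard := card_le_of_forall_isDualFormZero h2 hd hF (fun c hc => (hS.1 hc).1)
    fun c hc => (hS.1 hc).2
  calc (S.card : ℝ)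
      ≤ (d * 2 ^ n * Fintype.card Fq) ^ n * Fintype.card Fq ^ (C * n / 2) * 2 ^ n ^ 2 := by
        exact_mod_cast hcard
    _ = (d * 2 ^ n * Fintype.card Fq) ^ n * 2 ^ n ^ 2 * Fintype.card Fq ^ (C * n / 2) :=
        mul_right_comm _ _ _
    _ ≤ _ := by
        gcongr
        exact pow_mul_div_two_le_rpow (by exact_mod_cast hq) C n

/-- For a non-singular diagonal cubic in 6 variables over `F_q[t]` with
`char F_q(t) > 3`, the number of zeros of the dual form `F*` of height at most
`Ĉ = q^C` is `O_ε(Ĉ^{3+ε})`. A zero of `F*` is a `c` admitting square roots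
`sᵢ² = Fᵢ⁻¹ cᵢ³` (in the algebraic closure) with `Σ sᵢ = 0`. -/
theorem dual_form_count_six_variables
    (hchar : 3 < ringChar Fq)
    (F : Fin 6 → Polynomial Fq) (hF : ∀ i, F i ≠ 0)
    (ε : ℝ) (hε : 0 < ε) :
    ∃ K : ℝ, 0 < K ∧ ∀ Cexp : ℕ,
      (Nat.card {c : Fin 6 → Polynomial Fq //
          (∀ i, fabsP Fq (c i) ≤ (Fintype.card Fq : ℝ) ^ Cexp) ∧
          ∃ s : Fin 6 → AlgebraicClosure (RatFunc Fq),
            (∀ i, s i ^ 2 = (amap Fq (F i))⁻¹ * amap Fq (c i) ^ 3) ∧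
            ∑ i, s i = 0} : ℝ)
        ≤ K * ((Fintype.card Fq : ℝ) ^ Cexp) ^ ((3 : ℝ) + ε) := by
  obtain ⟨K, hK, hcount⟩ :=
    dual_form_count_six_variables_general Fq (by omega) (d := 3) (by decide) F hF
  refine ⟨K, hK, fun C => (hcount C).trans ?_⟩
  have hq : 1 ≤ (Fintype.card Fq : ℝ) ^ C :=
    one_le_pow₀ (by exact_mod_cast Fintype.card_pos (α := Fq))
  gcongr
  push_cast
  linarith
end
end

section
/- Assume char(F_q(t)) > 3 and let F(x) = Σ_{i=1}^4 F_i x_i^3 be a non-singular diagonal cubic form in 4 variables over F_q[t] with dual form F*. Call c an ordinary solution of F*(c)=0 if it is not special, where c is special if all c_i ≠ 0 and there is a partition {i,j,k,l}={1,2,3,4} with (F_i^{-1}c_i^3)^{1/2}+(F_j^{-1}c_j^3)^{1/2} = (F_k^{-1}c_k^3)^{1/2}+(F_l^{-1}c_l^3)^{1/2} = 0 for suitable square roots. Then the number of ordinary solutions c ∈ F_q[t]^4 with F*(c)=0 and |c| ≤ Ĉ is O_ε(Ĉ^{1+ε}). -/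
open scoped Classical
open MeasureTheory

noncomputable section

variable (Fq : Type) [Field Fq] [Fintype Fq]

/-- `c` is a zero of the dual form of the diagonal cubic `Σ Fᵢ xᵢ³`: for a
suitable choice of square roots `sᵢ` of `Fᵢ⁻¹ cᵢ³` one has `Σ sᵢ = 0`. -/
def DualZero (F c : Fin 4 → Polynomial Fq) : Prop :=
  ∃ s : Fin 4 → AlgebraicClosure (RatFunc Fq),
    (∀ i, s i ^ 2 = (amap Fq (F i))⁻¹ * amap Fq (c i) ^ 3) ∧ ∑ i, s i = 0

/-- `c` is a special solution: all `cᵢ ≠ 0` and there is a partition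
`{i,j,k,l} = {1,2,3,4}` with `(Fᵢ⁻¹cᵢ³)^{1/2} + (Fⱼ⁻¹cⱼ³)^{1/2} = 0` and
`(F_k⁻¹c_k³)^{1/2} + (F_l⁻¹c_l³)^{1/2} = 0` for suitable square roots. -/
def SpecialSolution (F c : Fin 4 → Polynomial Fq) : Prop :=
  (∀ i, c i ≠ 0) ∧
  ∃ σ : Equiv.Perm (Fin 4), ∃ s : Fin 4 → AlgebraicClosure (RatFunc Fq),
    (∀ i, s i ^ 2 = (amap Fq (F (σ i)))⁻¹ * amap Fq (c (σ i)) ^ 3) ∧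
    s 0 + s 1 = 0 ∧ s 2 + s 3 = 0

/-!
If `F*(c) = 0`, choose square roots `sᵢ` of `Fᵢ⁻¹ cᵢ³` with `∑ sᵢ = 0`. Squaring
`s₁ + s₂ = -(s₃ + s₄)` shows that either `s₁ s₂` lies in `K` or `s₁ s₂ = s₃ s₄`, and in the latter
case the four roots cancel in pairs. So for an ordinary `c` all products `sᵢ sⱼ` lie in `K`. Hence
the square roots of the `Fᵢ cᵢ` are all proportional over `K`, that is `Fᵢ cᵢ = d eᵢ²` with a common
`d ≠ 0`, and the relation `∑ sᵢ = 0` becomes the diagonal cubic equation `∑ Fᵢ⁻² eᵢ³ = 0`.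

By Cauchy–Schwarz the number of zeros `e` of degree at most `m` of a diagonal cubic in four
variables is at most the mean of two counts of solutions to `a x³ + b y³ = a x'³ + b y'³`. A
difference `n = a x³ - a x'³ ≠ 0` is divisible by `x - x'`, so it has few representations by the
divisor bound, and the count is `O(q^((2 + ε) m))`. With `deg d + 2 m ≤ C + O(1)`, summing over
`deg d` gives `O(q^((1 + ε) C))` ordinary zeros.
-/

section DifferenceCounts

open Finset

variable {α β G : Type*} [AddCommGroup G]

/-- The number of representations of `n` as a difference `f x - f y` with `x, y ∈ s`. At `n = 0`
this is the second moment of the fibres of `f`, the quantity Hua's method bounds. -/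
def diffCount (s : Finset α) (f : α → G) (n : G) : ℕ :=
  #{p ∈ s ×ˢ s | f p.1 - f p.2 = n}

lemma card_filter_eq_eq_sum_mul {H : Type*} {s : Finset α} (t : Finset β) {f : α → H} (g : β → H)
    {T : Finset H} (hf : ∀ x ∈ s, f x ∈ T) :
    #{p ∈ s ×ˢ t | f p.1 = g p.2} = ∑ n ∈ T, #{x ∈ s | f x = n} * #{y ∈ t | g y = n} := by
  rw [card_eq_sum_card_fiberwise (f := fun p => f p.1) (t := T)]
  · refine sum_congr rfl fun n _ => ?_
    rw [← card_product, ← filter_product, filter_filter]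
    congr 1
    refine filter_congr fun p _ => ?_
    grind
  · intro p hp
    exact hf _ (mem_product.1 (mem_filter.1 hp).1).1

lemma diffCount_zero_eq_sum_sq {s : Finset α} {f : α → G} {T : Finset G}
    (hf : ∀ x ∈ s, f x ∈ T) : diffCount s f 0 = ∑ n ∈ T, #{x ∈ s | f x = n} ^ 2 := by
  simp only [diffCount, sub_eq_zero, card_filter_eq_eq_sum_mul s f hf, sq]

lemma diffCount_neg_zero (s : Finset α) (f : α → G) :
    diffCount s (-f) 0 = diffCount s f 0 := by
  simp only [diffCount, Pi.neg_apply, sub_eq_zero, neg_inj]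

lemma two_mul_card_filter_add_eq_zero_le (s : Finset α) (t : Finset β) (f : α → G) (g : β → G) :
    2 * #{p ∈ s ×ˢ t | f p.1 + g p.2 = 0} ≤ diffCount s f 0 + diffCount t g 0 := by
  set T := s.image f ∪ t.image (-g)
  have hf : ∀ x ∈ s, f x ∈ T := fun x hx => mem_union_left _ (mem_image_of_mem f hx)
  have hg : ∀ y ∈ t, (-g) y ∈ T := fun y hy => mem_union_right _ (mem_image_of_mem (-g) hy)
  simp only [add_eq_zero_iff_eq_neg, ← Pi.neg_apply g]
  rw [← diffCount_neg_zero t g, diffCount_zero_eq_sum_sq hf, diffCount_zero_eq_sum_sq hg,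
    card_filter_eq_eq_sum_mul t (-g) hf, mul_sum, ← sum_add_distrib]
  refine sum_le_sum fun n _ => ?_
  rw [← mul_assoc]
  exact two_mul_le_add_sq _ _

lemma diffCount_add (s : Finset α) (t : Finset β) (f : α → G) (g : β → G) (n : G) :
    diffCount (s ×ˢ t) (fun p => f p.1 + g p.2) n =
      ∑ q ∈ t ×ˢ t, diffCount s f (n - (g q.1 - g q.2)) := by
  rw [diffCount, card_eq_sum_card_fiberwise (f := fun p => (p.1.2, p.2.2)) (t := t ×ˢ t)]
  · refine sum_congr rfl fun q hq => ?_
    refine card_nbij' (fun p => (p.1.1, p.2.1)) (fun r => ((r.1, q.1), (r.2, q.2))) ?_ ?_ ?_ ?_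
    · rintro ⟨⟨x, y⟩, x', y'⟩ hp
      simp only [coe_filter, mem_filter, mem_product, Set.mem_ofPred_eq] at hp ⊢
      obtain ⟨⟨⟨⟨hx, -⟩, hx', -⟩, rfl⟩, rfl⟩ := hp
      exact ⟨⟨hx, hx'⟩, by dsimp only; abel⟩
    · rintro ⟨x, x'⟩ hr
      simp only [coe_filter, mem_filter, mem_product, Set.mem_ofPred_eq] at hr hq ⊢
      exact ⟨⟨⟨⟨hr.1.1, hq.1⟩, hr.1.2, hq.2⟩,
        by rw [add_sub_add_comm, hr.2, sub_add_cancel]⟩, trivial⟩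
    · rintro ⟨⟨x, y⟩, x', y'⟩ hp
      obtain rfl := (mem_filter.1 hp).2
      rfl
    · exact fun _ _ => rfl
  · rintro ⟨⟨x, y⟩, x', y'⟩ hp
    simp only [coe_filter, mem_product, Set.mem_ofPred_eq] at hp
    exact mem_product.2 ⟨hp.1.1.2, hp.1.2.2⟩

lemma diffCount_add_zero_le {s : Finset α} (t : Finset β) {f : α → G} (g : β → G) {W : ℕ}
    (hW : ∀ n ≠ 0, diffCount s f n ≤ W) :
    diffCount (s ×ˢ t) (fun p => f p.1 + g p.2) 0 ≤
      #t ^ 2 * W + diffCount s f 0 * diffCount t g 0 := by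
  have hterm : ∀ q ∈ t ×ˢ t, diffCount s f (0 - (g q.1 - g q.2)) ≤
      W + if g q.1 - g q.2 = 0 then diffCount s f 0 else 0 := by
    intro q _
    split_ifs with h
    · simp [h]
    · exact hW _ (by rwa [zero_sub, neg_ne_zero])
  calc diffCount (s ×ˢ t) (fun p => f p.1 + g p.2) 0
      ≤ ∑ q ∈ t ×ˢ t, (W + if g q.1 - g q.2 = 0 then diffCount s f 0 else 0) :=
        (diffCount_add s t f g 0).trans_le (sum_le_sum hterm)
    _ = #t ^ 2 * W + diffCount s f 0 * diffCount t g 0 := by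
        rw [sum_add_distrib, sum_const, ← sum_filter, sum_const, card_product, smul_eq_mul,
          smul_eq_mul, ← sq, mul_comm (diffCount s f 0)]
        rfl

theorem card_piFinset_filter_sum_eq_zero_le {s : Fin 4 → Finset α} {f : Fin 4 → α → G}
    {M Z W : ℕ} (hM : ∀ i, #(s i) ≤ M) (hZ : ∀ i, diffCount (s i) (f i) 0 ≤ Z)
    (hW : ∀ i, ∀ n ≠ 0, diffCount (s i) (f i) n ≤ W) :
    #{x ∈ Fintype.piFinset s | ∑ i, f i (x i) = 0} ≤ M ^ 2 * W + Z ^ 2 := by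
  have hpair : ∀ i j, diffCount (s i ×ˢ s j) (fun p => f i p.1 + f j p.2) 0 ≤
      M ^ 2 * W + Z ^ 2 := fun i j =>
    calc _ ≤ #(s j) ^ 2 * W + diffCount (s i) (f i) 0 * diffCount (s j) (f j) 0 :=
          diffCount_add_zero_le (s j) (f j) (hW i)
      _ ≤ M ^ 2 * W + Z * Z := by gcongr <;> apply_assumption
      _ = M ^ 2 * W + Z ^ 2 := by rw [sq Z]
  have hsplit : #{x ∈ Fintype.piFinset s | ∑ i, f i (x i) = 0} ≤
      #{p ∈ (s 0 ×ˢ s 1) ×ˢ (s 2 ×ˢ s 3) |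
        f 0 p.1.1 + f 1 p.1.2 + (f 2 p.2.1 + f 3 p.2.2) = 0} := by
    refine card_le_card_of_injOn (fun x => ((x 0, x 1), (x 2, x 3))) ?_ ?_
    · intro x hx
      simp only [coe_filter, Fintype.mem_piFinset, Fin.sum_univ_four, Set.mem_ofPred_eq] at hx
      simp [hx.1, ← hx.2, add_assoc]
    · intro x _ y _ hxy
      simp only [Prod.mk.injEq] at hxy
      ext i
      fin_cases i <;> simp [hxy]
  have hcross := two_mul_card_filter_add_eq_zero_le (s 0 ×ˢ s 1) (s 2 ×ˢ s 3)
    (fun p => f 0 p.1 + f 1 p.2) (fun p => f 2 p.1 + f 3 p.2)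
  linarith [hpair 0 1, hpair 2 3]

end DifferenceCounts

section Cubes

open Finset

variable {R : Type*} [CommRing R] [IsDomain R]

lemma diffCount_mul_pow_zero_le {a : R} (ha : a ≠ 0) {m : ℕ} (hm : 0 < m) (s : Finset R) :
    diffCount s (fun x => a * x ^ m) 0 ≤ m * #s := by
  refine card_le_mul_card_image_of_maps_to (f := Prod.snd) (t := s)
    (fun p hp => (mem_product.1 (mem_filter.1 hp).1).2) m fun y _ => ?_
  refine le_trans (card_le_card_of_injOn (t := (Polynomial.nthRoots m (y ^ m)).toFinset)
    Prod.fst ?_ ?_) ((Multiset.toFinset_card_le _).trans (Polynomial.card_nthRoots _ _))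
  · rintro ⟨x, y'⟩ hp
    obtain ⟨hxy, rfl⟩ := mem_filter.1 hp
    rw [mem_coe, Multiset.mem_toFinset, Polynomial.mem_nthRoots hm]
    exact mul_left_cancel₀ ha (sub_eq_zero.1 (mem_filter.1 hxy).2)
  · intro p hp p' hp' h
    exact Prod.ext h ((mem_filter.1 hp).2.trans (mem_filter.1 hp').2.symm)

lemma eq_or_eq_neg_of_sub_eq_of_cube_sub_eq (h3 : (3 : R) ≠ 0) {x y x' y' : R} (hxy : x ≠ y)
    (hsub : x - y = x' - y') (hcube : x ^ 3 - y ^ 3 = x' ^ 3 - y' ^ 3) :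
    (x' = x ∧ y' = y) ∨ (x' = -y ∧ y' = -x) := by
  have hy' : y' = x' - (x - y) := by linear_combination hsub
  have hprod : 3 * (x - y) * ((x' - x) * (x' + y)) = 0 := by
    rw [hy'] at hcube
    linear_combination -hcube
  rcases mul_eq_zero.1 ((mul_eq_zero.1 hprod).resolve_left
    (mul_ne_zero h3 (sub_ne_zero.2 hxy))) with h | h
  · exact .inl ⟨sub_eq_zero.1 h, by linear_combination hy' + h⟩
  · exact .inr ⟨eq_neg_of_add_eq_zero_left h, by linear_combination hy' + h⟩

lemma diffCount_mul_cube_le (h3 : (3 : R) ≠ 0) (a : R) {n : R} (hn : n ≠ 0) (s : Finset R)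
    {D : Finset R} (hD : ∀ u, u ∣ n → u ∈ D) :
    diffCount s (fun x => a * x ^ 3) n ≤ 2 * #D := by
  refine card_le_mul_card_image_of_maps_to (f := fun p => p.1 - p.2) (t := D) ?_ 2 fun u _ => ?_
  · rintro ⟨x, y⟩ hp
    have hxy : a * x ^ 3 - a * y ^ 3 = n := (mem_filter.1 hp).2
    exact hD _ ⟨a * (x ^ 2 + x * y + y ^ 2), by rw [← hxy]; ring⟩
  rcases eq_empty_or_nonempty
    {p ∈ {p ∈ s ×ˢ s | a * p.1 ^ 3 - a * p.2 ^ 3 = n} | p.1 - p.2 = u} with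
    hempty | ⟨⟨x, y⟩, hmem⟩
  · simp [hempty]
  simp only [mem_filter] at hmem
  obtain ⟨⟨-, hxy⟩, hu⟩ := hmem
  refine (card_le_card (t := {(x, y), (-y, -x)}) ?_).trans card_le_two
  rintro ⟨x', y'⟩ hp
  simp only [mem_filter] at hp
  obtain ⟨⟨-, hxy'⟩, hu'⟩ := hp
  have ha : a ≠ 0 := by rintro rfl; simp [← hxy] at hn
  have hne : x ≠ y := by rintro rfl; simp [← hxy] at hn
  have hcube : x ^ 3 - y ^ 3 = x' ^ 3 - y' ^ 3 :=
    mul_left_cancel₀ ha (by rw [mul_sub, mul_sub, hxy, hxy'])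
  simpa using eq_or_eq_neg_of_sub_eq_of_cube_sub_eq h3 hne (hu.trans hu'.symm) hcube

end Cubes

section RealPowers

lemma exists_forall_add_one_le_mul_pow {θ : ℝ} (hθ : 1 < θ) :
    ∃ A : ℝ, 1 ≤ A ∧ ∀ i : ℕ, (i : ℝ) + 1 ≤ A * θ ^ i := by
  have hθ' : 0 < θ - 1 := sub_pos.2 hθ
  refine ⟨1 + (θ - 1)⁻¹, le_add_of_nonneg_right (inv_pos.2 hθ').le, fun i => ?_⟩
  have hbernoulli : 1 + i * (θ - 1) ≤ θ ^ i := by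
    simpa using one_add_mul_le_pow (a := θ - 1) (by linarith) i
  calc (i : ℝ) + 1 ≤ (i : ℝ) + 1 + (i * (θ - 1) + (θ - 1)⁻¹) := by
        have : 0 ≤ i * (θ - 1) + (θ - 1)⁻¹ := by positivity
        linarith
    _ = (1 + (θ - 1)⁻¹) * (1 + i * (θ - 1)) := by field_simp; ring
    _ ≤ (1 + (θ - 1)⁻¹) * θ ^ i := by gcongr

lemma exists_one_lt_pow_eq {θ : ℝ} (hθ : 1 < θ) {n : ℕ} (hn : n ≠ 0) :
    ∃ η : ℝ, 1 < η ∧ η ^ n = θ :=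
  ⟨θ ^ (n : ℝ)⁻¹, Real.one_lt_rpow hθ (by positivity),
    Real.rpow_inv_natCast_pow (zero_le_one.trans hθ.le) hn⟩

end RealPowers

section PolynomialDivisors

open Finset Polynomial

/-- The polynomials of degree at most `m` over a finite coefficient ring. -/
def natDegreeLE (k : Type*) [Semiring k] [Fintype k] (m : ℕ) : Finset k[X] :=
  univ.map ((degreeLTEquiv k (m + 1)).symm.toEquiv.toEmbedding.trans (.subtype _))

lemma mem_natDegreeLE {k : Type*} [Semiring k] [Fintype k] {m : ℕ} {p : k[X]} :
    p ∈ natDegreeLE k m ↔ p.natDegree ≤ m := by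
  have hlt : p.natDegree ≤ m ↔ p ∈ degreeLT k (m + 1) := by
    rw [degreeLT_succ_eq_degreeLE, mem_degreeLE, natDegree_le_iff_degree_le]
  rw [hlt, natDegreeLE, mem_map]
  constructor
  · rintro ⟨v, -, rfl⟩
    exact ((degreeLTEquiv k (m + 1)).symm v).2
  · intro hp
    exact ⟨degreeLTEquiv k (m + 1) ⟨p, hp⟩, mem_univ _, by simp⟩

lemma card_natDegreeLE (k : Type*) [Semiring k] [Fintype k] (m : ℕ) :
    #(natDegreeLE k m) = Fintype.card k ^ (m + 1) := by
  simp [natDegreeLE]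

variable {k : Type*} [Field k] [Fintype k]

/-- The divisors of a nonzero polynomial `n`. At `n = 0` this is the junk value `{0, units}`. -/
def polyDivisors (n : k[X]) : Finset k[X] :=
  {u ∈ natDegreeLE k n.natDegree | u ∣ n}

/-- The monic divisors of a nonzero polynomial. -/
def monicDivisors (n : k[X]) : Finset k[X] :=
  {u ∈ polyDivisors n | u.Monic}

/-- The monic prime divisors of degree at most `L`. -/
def smallPrimeDivisors (L : ℕ) (n : k[X]) : Finset k[X] :=
  {p ∈ natDegreeLE k L | Prime p ∧ p.Monic ∧ p ∣ n}

lemma mem_polyDivisors {n u : k[X]} (hn : n ≠ 0) : u ∈ polyDivisors n ↔ u ∣ n := by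
  rw [polyDivisors, mem_filter, mem_natDegreeLE]
  exact and_iff_right_of_imp fun h => natDegree_le_of_dvd h hn

lemma mem_monicDivisors {n u : k[X]} (hn : n ≠ 0) : u ∈ monicDivisors n ↔ u ∣ n ∧ u.Monic := by
  rw [monicDivisors, mem_filter, mem_polyDivisors hn]

lemma card_polyDivisors_le {n : k[X]} (hn : n ≠ 0) :
    #(polyDivisors n) ≤ Fintype.card k * #(monicDivisors n) := by
  refine (card_le_card (t := image₂ (fun c u => C c * u) univ (monicDivisors n)) ?_).trans
    (card_image₂_le _ _ _)
  intro u hu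
  rw [mem_polyDivisors hn] at hu
  have hu0 : u ≠ 0 := ne_zero_of_dvd_ne_zero hn hu
  refine mem_image₂.2 ⟨u.leadingCoeff, mem_univ _, normalize u, ?_, ?_⟩
  · exact (mem_monicDivisors hn).2 ⟨normalize_dvd_iff.2 hu, monic_normalize hu0⟩
  · rw [normalize_apply, coe_normUnit_of_ne_zero hu0, mul_left_comm, ← C_mul,
      mul_inv_cancel₀ (leadingCoeff_ne_zero.2 hu0), C_1, mul_one]

lemma card_monicDivisors_mul_le {x y : k[X]} (hx : x ≠ 0) (hy : y ≠ 0) :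
    #(monicDivisors (x * y)) ≤ #(monicDivisors x) * #(monicDivisors y) := by
  refine (card_le_card (t := image₂ (· * ·) (monicDivisors x) (monicDivisors y)) ?_).trans
    (card_image₂_le _ _ _)
  intro u hu
  obtain ⟨hdvd, hmonic⟩ := (mem_monicDivisors (mul_ne_zero hx hy)).1 hu
  obtain ⟨a, b, ha, hb, rfl⟩ := exists_dvd_and_dvd_of_dvd_mul hdvd
  have ha0 : a ≠ 0 := ne_zero_of_dvd_ne_zero hx ha
  have hb0 : b ≠ 0 := ne_zero_of_dvd_ne_zero hy hb
  refine mem_image₂.2 ⟨normalize a, ?_, normalize b, ?_, ?_⟩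
  · exact (mem_monicDivisors hx).2 ⟨normalize_dvd_iff.2 ha, monic_normalize ha0⟩
  · exact (mem_monicDivisors hy).2 ⟨normalize_dvd_iff.2 hb, monic_normalize hb0⟩
  · rw [← normalize_mul, hmonic.normalize_eq_self]

lemma card_monicDivisors_prime_pow_le {p : k[X]} (hp : Prime p) (i : ℕ) :
    #(monicDivisors (p ^ i)) ≤ i + 1 := by
  refine (card_le_card (t := (range (i + 1)).image fun j => normalize (p ^ j)) ?_).trans
    (card_image_le.trans (card_range _).le)
  intro u hu
  obtain ⟨hdvd, hmonic⟩ := (mem_monicDivisors (pow_ne_zero _ hp.ne_zero)).1 hu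
  obtain ⟨j, hj, hassoc⟩ := (dvd_prime_pow hp i).1 hdvd
  refine mem_image.2 ⟨j, mem_range.2 (Nat.lt_succ_of_le hj), ?_⟩
  rw [← hmonic.normalize_eq_self]
  exact (normalize_eq_normalize_iff_associated.2 hassoc).symm

lemma card_monicDivisors_le_one_of_isUnit {n : k[X]} (hn : IsUnit n) : #(monicDivisors n) ≤ 1 := by
  refine card_le_one_iff_subset_singleton.2 ⟨1, fun u hu => ?_⟩
  obtain ⟨hdvd, hmonic⟩ := (mem_monicDivisors hn.ne_zero).1 hu
  exact mem_singleton.2 (hmonic.eq_one_of_isUnit (isUnit_of_dvd_unit hdvd hn))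

lemma card_smallPrimeDivisors_add_le (L : ℕ) {x y : k[X]} (hxy : IsRelPrime x y) :
    #(smallPrimeDivisors L x) + #(smallPrimeDivisors L y) ≤ #(smallPrimeDivisors L (x * y)) := by
  rw [← card_union_of_disjoint]
  · refine card_le_card (union_subset ?_ ?_) <;>
      refine monotone_filter_right _ fun p _ hp => ⟨hp.1, hp.2.1, ?_⟩
    · exact hp.2.2.mul_right y
    · exact hp.2.2.mul_left x
  · refine disjoint_left.2 fun p hpx hpy => ?_
    obtain ⟨-, hprime, -, hx⟩ := mem_filter.1 hpx
    exact hprime.not_isUnit (hxy hx (mem_filter.1 hpy).2.2.2)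

lemma normalize_mem_smallPrimeDivisors {L : ℕ} {p n : k[X]} (hp : Prime p)
    (hL : p.natDegree ≤ L) (hpn : p ∣ n) : normalize p ∈ smallPrimeDivisors L n := by
  refine mem_filter.2 ⟨?_, (normalize_associated p).symm.prime hp, monic_normalize hp.ne_zero,
    normalize_dvd_iff.2 hpn⟩
  rwa [mem_natDegreeLE, natDegree_eq_of_degree_eq degree_normalize]

section

variable {θ A : ℝ} {L : ℕ}

/- Primes of degree at least `L` cost nothing, because `i + 1 ≤ 2 ^ i ≤ θ ^ (i * deg p)`; each of
the finitely many smaller ones costs one factor `A`. -/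
lemma card_monicDivisors_prime_pow_le_mul (hθ : 1 < θ) (hA : 1 ≤ A)
    (hAθ : ∀ i : ℕ, (i : ℝ) + 1 ≤ A * θ ^ i) (hL : 2 ≤ θ ^ L) {p : k[X]} (hp : Prime p) (i : ℕ) :
    (#(monicDivisors (p ^ i)) : ℝ) ≤
      A ^ #(smallPrimeDivisors L (p ^ i)) * θ ^ (p ^ i).natDegree := by
  have hcard : (#(monicDivisors (p ^ i)) : ℝ) ≤ i + 1 := by
    exact_mod_cast card_monicDivisors_prime_pow_le hp i
  refine hcard.trans ?_
  rw [natDegree_pow, mul_comm i, pow_mul]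
  rcases le_total L p.natDegree with hlarge | hsmall
  · calc (i : ℝ) + 1 ≤ 2 ^ i := by exact_mod_cast Nat.lt_two_pow_self (n := i)
      _ ≤ 1 * (θ ^ p.natDegree) ^ i := by
        rw [one_mul]
        gcongr
        exact hL.trans (pow_le_pow_right₀ hθ.le hlarge)
      _ ≤ A ^ #(smallPrimeDivisors L (p ^ i)) * (θ ^ p.natDegree) ^ i := by
        gcongr
        exact one_le_pow₀ hA
  · rcases eq_or_ne i 0 with rfl | hi
    · simpa using one_le_pow₀ hA
    have hmem := normalize_mem_smallPrimeDivisors hp hsmall (dvd_pow_self p hi)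
    calc (i : ℝ) + 1 ≤ A * θ ^ i := hAθ i
      _ ≤ A ^ #(smallPrimeDivisors L (p ^ i)) * (θ ^ p.natDegree) ^ i := by
        gcongr
        · exact le_self_pow₀ hA (card_pos.2 ⟨_, hmem⟩).ne'
        · exact le_self_pow₀ hθ.le hp.irreducible.natDegree_pos.ne'

lemma card_monicDivisors_le_mul (hθ : 1 < θ) (hA : 1 ≤ A)
    (hAθ : ∀ i : ℕ, (i : ℝ) + 1 ≤ A * θ ^ i) (hL : 2 ≤ θ ^ L) {n : k[X]} (hn : n ≠ 0) :
    (#(monicDivisors n) : ℝ) ≤ A ^ #(smallPrimeDivisors L n) * θ ^ n.natDegree := by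
  induction n using UniqueFactorizationMonoid.induction_on_coprime with
  | h0 => exact absurd rfl hn
  | @h1 x hx =>
    calc (#(monicDivisors x) : ℝ) ≤ 1 := by
          exact_mod_cast card_monicDivisors_le_one_of_isUnit hx
      _ ≤ A ^ #(smallPrimeDivisors L x) * θ ^ x.natDegree :=
          one_le_mul_of_one_le_of_one_le (one_le_pow₀ hA) (one_le_pow₀ hθ.le)
  | hpr i hp => exact card_monicDivisors_prime_pow_le_mul hθ hA hAθ hL hp i
  | @hcp x y hxy ihx ihy =>
    have hx : x ≠ 0 := left_ne_zero_of_mul hn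
    have hy : y ≠ 0 := right_ne_zero_of_mul hn
    calc (#(monicDivisors (x * y)) : ℝ) ≤ #(monicDivisors x) * #(monicDivisors y) := by
          exact_mod_cast card_monicDivisors_mul_le hx hy
      _ ≤ (A ^ #(smallPrimeDivisors L x) * θ ^ x.natDegree) *
          (A ^ #(smallPrimeDivisors L y) * θ ^ y.natDegree) := by
          gcongr
          · exact ihx hx
          · exact ihy hy
      _ = A ^ (#(smallPrimeDivisors L x) + #(smallPrimeDivisors L y)) *
          θ ^ (x * y).natDegree := by
          rw [natDegree_mul hx hy]
          ring
      _ ≤ A ^ #(smallPrimeDivisors L (x * y)) * θ ^ (x * y).natDegree := by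
          gcongr
          exact card_smallPrimeDivisors_add_le L hxy

end

variable (k) in
theorem exists_card_polyDivisors_le {θ : ℝ} (hθ : 1 < θ) :
    ∃ K : ℝ, 0 < K ∧ ∀ n : k[X], n ≠ 0 → (#(polyDivisors n) : ℝ) ≤ K * θ ^ n.natDegree := by
  obtain ⟨L, hL⟩ := pow_unbounded_of_one_lt 2 hθ
  obtain ⟨A, hA, hAθ⟩ := exists_forall_add_one_le_mul_pow hθ
  refine ⟨Fintype.card k * A ^ #(natDegreeLE k L), by positivity, fun n hn => ?_⟩
  calc (#(polyDivisors n) : ℝ) ≤ Fintype.card k * #(monicDivisors n) := by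
        exact_mod_cast card_polyDivisors_le hn
    _ ≤ Fintype.card k * (A ^ #(smallPrimeDivisors L n) * θ ^ n.natDegree) := by
        gcongr
        exact card_monicDivisors_le_mul hθ hA hAθ hL.le hn
    _ ≤ Fintype.card k * A ^ #(natDegreeLE k L) * θ ^ n.natDegree := by
        rw [mul_assoc]
        gcongr
        exact filter_subset _ _

end PolynomialDivisors

section CubicZeros

open Finset Polynomial

variable {k : Type*} [Field k] [Fintype k]

lemma exists_diffCount_mul_cube_le (h3 : (3 : k) ≠ 0) {θ : ℝ} (hθ : 1 < θ) :
    ∃ K : ℝ, 0 < K ∧ ∀ (a : k[X]) (m : ℕ), ∀ n ≠ 0,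
      (diffCount (natDegreeLE k m) (fun x => a * x ^ 3) n : ℝ) ≤
        K * θ ^ (a.natDegree + 3 * m) := by
  obtain ⟨K, hK, hdiv⟩ := exists_card_polyDivisors_le k hθ
  have h3' : (3 : k[X]) ≠ 0 := by rw [← map_ofNat C 3]; exact C_ne_zero.2 h3
  refine ⟨2 * K, by positivity, fun a m n hn => ?_⟩
  rcases eq_or_ne (diffCount (natDegreeLE k m) (fun x => a * x ^ 3) n) 0 with hzero | hpos
  · rw [hzero, Nat.cast_zero]
    positivity
  obtain ⟨⟨x, y⟩, hxy⟩ := card_ne_zero.1 hpos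
  have hdeg : n.natDegree ≤ a.natDegree + 3 * m := by
    simp only [mem_filter, mem_product, mem_natDegreeLE] at hxy
    obtain ⟨⟨hx, hy⟩, rfl⟩ := hxy
    have hcube {z : k[X]} (hz : z.natDegree ≤ m) :
        (a * z ^ 3).natDegree ≤ a.natDegree + 3 * m :=
      natDegree_mul_le_of_le le_rfl (natDegree_pow_le_of_le 3 hz)
    exact natDegree_sub_le_iff_left (hcube hy) |>.2 (hcube hx)
  calc (diffCount (natDegreeLE k m) (fun x => a * x ^ 3) n : ℝ) ≤ 2 * #(polyDivisors n) := by
        exact_mod_cast diffCount_mul_cube_le h3' a hn _ fun u => (mem_polyDivisors hn).2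
    _ ≤ 2 * (K * θ ^ (a.natDegree + 3 * m)) := by
        gcongr
        exact (hdiv n hn).trans (by gcongr; exact hθ.le)
    _ = 2 * K * θ ^ (a.natDegree + 3 * m) := by ring

/-- The zeros of `∑ aᵢ xᵢ³` with all coordinates of degree at most `m`. -/
def cubicZeros (a : Fin 4 → k[X]) (m : ℕ) : Finset (Fin 4 → k[X]) :=
  {x ∈ Fintype.piFinset fun _ => natDegreeLE k m | ∑ i, a i * x i ^ 3 = 0}

lemma mem_cubicZeros {a x : Fin 4 → k[X]} {m : ℕ} :
    x ∈ cubicZeros a m ↔ (∀ i, (x i).natDegree ≤ m) ∧ ∑ i, a i * x i ^ 3 = 0 := by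
  simp only [cubicZeros, mem_filter, Fintype.mem_piFinset, mem_natDegreeLE]

lemma card_cubicZeros_le {a : Fin 4 → k[X]} (ha : ∀ i, a i ≠ 0) {m W : ℕ}
    (hW : ∀ i, ∀ n ≠ 0, diffCount (natDegreeLE k m) (fun x => a i * x ^ 3) n ≤ W) :
    #(cubicZeros a m) ≤
      (Fintype.card k ^ (m + 1)) ^ 2 * W + (3 * Fintype.card k ^ (m + 1)) ^ 2 := by
  have hZ : ∀ i, diffCount (natDegreeLE k m) (fun x => a i * x ^ 3) 0 ≤
      3 * Fintype.card k ^ (m + 1) := fun i =>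
    card_natDegreeLE k m ▸ diffCount_mul_pow_zero_le (ha i) three_pos _
  rw [cubicZeros]
  convert card_piFinset_filter_sum_eq_zero_le (fun _ => (card_natDegreeLE k m).le) hZ hW

theorem exists_card_cubicZeros_le (h3 : (3 : k) ≠ 0) {a : Fin 4 → k[X]} (ha : ∀ i, a i ≠ 0)
    {θ : ℝ} (hθ : 1 < θ) :
    ∃ K : ℝ, 0 < K ∧ ∀ m : ℕ,
      (#(cubicZeros a m) : ℝ) ≤ K * (Fintype.card k : ℝ) ^ (2 * m) * θ ^ m := by
  obtain ⟨η, hη, rfl⟩ := exists_one_lt_pow_eq hθ three_ne_zero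
  obtain ⟨K, hK, hdiff⟩ := exists_diffCount_mul_cube_le h3 hη
  set q := Fintype.card k
  set f := ∑ i, (a i).natDegree
  refine ⟨(q : ℝ) ^ 2 * (K * η ^ f + 9), by positivity, fun m => ?_⟩
  set W := K * η ^ (f + 3 * m)
  have hW : ∀ i, ∀ n ≠ 0,
      diffCount (natDegreeLE k m) (fun x => a i * x ^ 3) n ≤ ⌊W⌋₊ := by
    intro i n hn
    have hdeg : (a i).natDegree ≤ f :=
      single_le_sum (f := fun i => (a i).natDegree) (fun _ _ => Nat.zero_le _) (mem_univ i)
    exact Nat.le_floor ((hdiff (a i) m n hn).trans (mul_le_mul_of_nonneg_left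
      (pow_le_pow_right₀ hη.le (Nat.add_le_add_right hdeg _)) hK.le))
  calc (#(cubicZeros a m) : ℝ)
      ≤ ((q : ℝ) ^ (m + 1)) ^ 2 * ⌊W⌋₊ + (3 * q ^ (m + 1)) ^ 2 * 1 := by
        rw [mul_one]
        exact_mod_cast card_cubicZeros_le ha hW
    _ ≤ ((q : ℝ) ^ (m + 1)) ^ 2 * W + (3 * q ^ (m + 1)) ^ 2 * (η ^ 3) ^ m := by
        gcongr
        · exact Nat.floor_le (by positivity)
        · exact one_le_pow₀ hθ.le
    _ = (q : ℝ) ^ 2 * (K * η ^ f + 9) * (q : ℝ) ^ (2 * m) * (η ^ 3) ^ m := by ring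

end CubicZeros

section SquareRoots

lemma exists_squarefree_mul_sq {A : Type*} [CommMonoidWithZero A]
    [UniqueFactorizationMonoid A] (n : A) : ∃ d e : A, Squarefree d ∧ n = d * e ^ 2 := by
  induction n using UniqueFactorizationMonoid.induction_on_prime with
  | h₁ => exact ⟨1, 0, squarefree_one, by simp⟩
  | h₂ n hn => exact ⟨n, 1, hn.squarefree, by simp⟩
  | h₃ n p _ hp ih =>
    obtain ⟨d, e, hd, rfl⟩ := ih
    by_cases hpd : p ∣ d
    · obtain ⟨d', rfl⟩ := hpd
      exact ⟨d', p * e, hd.of_mul_right, by rw [mul_pow, sq p]; ac_rfl⟩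
    · refine ⟨p * d, e, squarefree_mul_iff.2 ⟨?_, hp.irreducible.squarefree, hd⟩, ?_⟩
      · exact hp.irreducible.isRelPrime_iff_not_dvd.2 hpd
      · exact (mul_assoc _ _ _).symm

variable {A K L : Type*} [CommRing A] [IsDomain A] [UniqueFactorizationMonoid A] [Field K]
  [Algebra A K] [IsFractionRing A K] [Field L] [Algebra A L] [Algebra K L] [IsScalarTower A K L]

/- The element `r ρ` of `K` is integral over `A` and `d` divides its square, so `d` divides it. -/
lemma exists_eq_algebraMap_mul_of_squarefree {d g : A} {r ρ : L} (hd : Squarefree d)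
    (hρ : ρ ^ 2 = algebraMap A L d) (hρ0 : ρ ≠ 0) (hr : r ^ 2 = algebraMap A L g)
    (hmul : r * ρ ∈ (algebraMap K L).fieldRange) : ∃ e : A, r = algebraMap A L e * ρ := by
  obtain ⟨y, hy⟩ := hmul
  have hy2 : y ^ 2 = algebraMap A K (g * d) := by
    apply (algebraMap K L).injective
    rw [← IsScalarTower.algebraMap_apply, map_pow, hy, mul_pow, hr, hρ, map_mul]
  obtain ⟨h, rfl⟩ := IsIntegrallyClosed.exists_algebraMap_eq_of_isIntegral_pow (R := A)
    two_pos (hy2 ▸ isIntegral_algebraMap)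
  rw [← map_pow] at hy2
  obtain ⟨e, rfl⟩ : d ∣ h :=
    hd.isRadical 2 h ⟨g, by rw [IsFractionRing.injective A K hy2, mul_comm]⟩
  refine ⟨e, mul_right_cancel₀ hρ0 ?_⟩
  rw [← hy, ← IsScalarTower.algebraMap_apply, map_mul, mul_assoc, ← sq, hρ, mul_comm]

theorem exists_forall_eq_algebraMap_mul {ι : Type*} {g : ι → A} {r : ι → L}
    (hr : ∀ i, r i ^ 2 = algebraMap A L (g i))
    (hmul : ∀ i j, r i * r j ∈ (algebraMap K L).fieldRange) :
    ∃ (d : A) (ρ : L) (e : ι → A),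
      ρ ≠ 0 ∧ ρ ^ 2 = algebraMap A L d ∧ ∀ i, r i = algebraMap A L (e i) * ρ := by
  by_cases hzero : ∀ i, r i = 0
  · exact ⟨1, 1, 0, one_ne_zero, by simp, by simpa using hzero⟩
  obtain ⟨i, hi⟩ := not_forall.1 hzero
  obtain ⟨d, e₀, hd, hg⟩ := exists_squarefree_mul_sq (g i)
  have hri : r i ^ 2 = algebraMap A L d * algebraMap A L e₀ ^ 2 := by
    rw [hr, hg, map_mul, map_pow]
  have he₀ : algebraMap A L e₀ ≠ 0 := fun h => hi (by simpa [h] using hri)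
  set ρ := r i / algebraMap A L e₀
  have hρ : ρ ^ 2 = algebraMap A L d := by
    rw [div_pow, hri, mul_div_cancel_right₀ _ (pow_ne_zero 2 he₀)]
  have hρ0 : ρ ≠ 0 := div_ne_zero hi he₀
  have hρmul : ∀ j, r j * ρ ∈ (algebraMap K L).fieldRange := fun j => by
    rw [← mul_div_assoc]
    exact div_mem (hmul j i) ⟨algebraMap A K e₀, (IsScalarTower.algebraMap_apply A K L e₀).symm⟩
  choose e he using fun j => exists_eq_algebraMap_mul_of_squarefree hd hρ hρ0 (hr j) (hρmul j)
  exact ⟨d, ρ, e, hρ0, hρ, he⟩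

end SquareRoots

section VanishingSums

variable {L : Type*} [Field L]

lemma mul_mem_or_mul_eq_mul_of_add_eq_zero (h2 : (2 : L) ≠ 0) {R : Subfield L} {w x y z : L}
    (hw : w ^ 2 ∈ R) (hx : x ^ 2 ∈ R) (hy : y ^ 2 ∈ R) (hz : z ^ 2 ∈ R)
    (hsum : w + x + y + z = 0) : w * x ∈ R ∨ w * x = y * z := by
  set κ := y ^ 2 + z ^ 2 - w ^ 2 - x ^ 2
  have hκR : κ ∈ R := sub_mem (sub_mem (add_mem hy hz) hw) hx
  have hdiff : 2 * (w * x - y * z) = κ := by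
    linear_combination (w + x - y - z) * hsum
  rcases eq_or_ne κ 0 with h0 | h0
  · rw [h0] at hdiff
    exact .inr (sub_eq_zero.1 ((mul_eq_zero.1 hdiff).resolve_left h2))
  · left
    have h2R : (2 : L) ∈ R := ofNat_mem R 2
    have hformula : w * x = (2 ^ 2 * (w ^ 2 * x ^ 2 - y ^ 2 * z ^ 2) + κ ^ 2) / (2 ^ 2 * κ) := by
      rw [eq_div_iff (mul_ne_zero (pow_ne_zero 2 h2) h0)]
      linear_combination (-(2 * (w * x + y * z)) + κ) * hdiff
    rw [hformula]
    exact div_mem (add_mem (mul_mem (pow_mem h2R 2) (sub_mem (mul_mem hw hx) (mul_mem hy hz)))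
      (pow_mem hκR 2)) (mul_mem (pow_mem h2R 2) hκR)

lemma add_eq_zero_or_add_eq_zero_of_mul_eq_mul {w x y z : L} (hsum : w + x + y + z = 0)
    (hmul : w * x = y * z) : (w + y = 0 ∧ x + z = 0) ∨ (w + z = 0 ∧ x + y = 0) := by
  have hprod : (w + y) * (w + z) = 0 := by linear_combination w * hsum - hmul
  rcases mul_eq_zero.1 hprod with h | h
  · exact .inl ⟨h, by linear_combination hsum - h⟩
  · exact .inr ⟨h, by linear_combination hsum - h⟩

theorem forall_mul_mem_or_exists_perm_add_eq_zero (h2 : (2 : L) ≠ 0) {R : Subfield L}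
    {s : Fin 4 → L} (hs : ∀ i, s i ^ 2 ∈ R) (hsum : ∑ i, s i = 0) :
    (∀ i j, s i * s j ∈ R) ∨ ((∀ i, s i ≠ 0) ∧
      ∃ σ : Equiv.Perm (Fin 4), s (σ 0) + s (σ 1) = 0 ∧ s (σ 2) + s (σ 3) = 0) := by
  refine or_iff_not_imp_left.2 fun hmul => ?_
  push Not at hmul
  obtain ⟨i, j, hij⟩ := hmul
  have hne : i ≠ j := by
    rintro rfl
    exact hij (sq (s i) ▸ hs i)
  obtain ⟨σ, rfl, rfl⟩ : ∃ σ : Equiv.Perm (Fin 4), σ 0 = i ∧ σ 1 = j :=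
    MulAction.is_two_pretransitive_iff.1 (Equiv.Perm.isMultiplyPretransitive (Fin 4) 2)
      (by decide) hne
  have hsum' : s (σ 0) + s (σ 1) + s (σ 2) + s (σ 3) = 0 := by
    rw [← hsum, ← Equiv.sum_comp σ, Fin.sum_univ_four]
  have heq : s (σ 0) * s (σ 1) = s (σ 2) * s (σ 3) :=
    (mul_mem_or_mul_eq_mul_of_add_eq_zero h2 (hs _) (hs _) (hs _) (hs _) hsum').resolve_left hij
  constructor
  · have h01 : s (σ 0) * s (σ 1) ≠ 0 := fun h => hij (h ▸ zero_mem R)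
    have h23 : s (σ 2) * s (σ 3) ≠ 0 := heq ▸ h01
    intro l
    obtain ⟨l, rfl⟩ := σ.surjective l
    fin_cases l
    exacts [left_ne_zero_of_mul h01, right_ne_zero_of_mul h01, left_ne_zero_of_mul h23,
      right_ne_zero_of_mul h23]
  · rcases add_eq_zero_or_add_eq_zero_of_mul_eq_mul hsum' heq with ⟨h, h'⟩ | ⟨h, h'⟩
    · exact ⟨σ * Equiv.swap 1 2, h, h'⟩
    · exact ⟨σ * Equiv.swap 1 3, h, add_comm (s (σ 1)) _ ▸ h'⟩

end VanishingSums

section DualCoefficients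

open Finset

variable {ι R : Type*} [Fintype ι] [DecidableEq ι]

/-- The coefficients `∏_{l ≠ i} F_l²` of the diagonal cubic form which parametrises the ordinary
zeros of the dual form of `∑ Fᵢ xᵢ³`: it is `∑ Fᵢ⁻² xᵢ³` with denominators cleared. -/
def dualCoeff [CommMonoid R] (F : ι → R) (i : ι) : R :=
  ∏ l ∈ univ.erase i, F l ^ 2

lemma dualCoeff_mul_sq [CommMonoid R] (F : ι → R) (i : ι) :
    dualCoeff F i * F i ^ 2 = ∏ l, F l ^ 2 :=
  prod_erase_mul _ _ (mem_univ i)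

lemma dualCoeff_ne_zero [CommMonoidWithZero R] [Nontrivial R] [NoZeroDivisors R] {F : ι → R}
    (hF : ∀ i, F i ≠ 0) (i : ι) : dualCoeff F i ≠ 0 :=
  prod_ne_zero_iff.2 fun l _ => pow_ne_zero 2 (hF l)

end DualCoefficients

section DualForm

open Finset Polynomial

variable {k : Type} [Field k]

lemma amap_eq_algebraMap :
    amap k = algebraMap k[X] (AlgebraicClosure (RatFunc k)) :=
  funext fun x => (IsScalarTower.algebraMap_apply _ (RatFunc k) _ x).symm

lemma amap_mem_fieldRange (x : k[X]) :
    amap k x ∈ (algebraMap (RatFunc k) (AlgebraicClosure (RatFunc k))).fieldRange :=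
  ⟨_, rfl⟩

lemma amap_injective : Function.Injective (amap k) :=
  (algebraMap (RatFunc k) _).injective.comp (IsFractionRing.injective k[X] (RatFunc k))

lemma mul_mem_fieldRange_of_not_specialSolution (h2 : (2 : k) ≠ 0) {F c : Fin 4 → k[X]}
    {s : Fin 4 → AlgebraicClosure (RatFunc k)}
    (hs : ∀ i, s i ^ 2 = (amap k (F i))⁻¹ * amap k (c i) ^ 3) (hsum : ∑ i, s i = 0)
    (hord : ¬ SpecialSolution k F c) (i j : Fin 4) :
    s i * s j ∈ (algebraMap (RatFunc k) (AlgebraicClosure (RatFunc k))).fieldRange := by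
  have h2' : (2 : AlgebraicClosure (RatFunc k)) ≠ 0 := by
    rw [← map_ofNat (algebraMap k (AlgebraicClosure (RatFunc k))) 2]
    exact (_root_.map_ne_zero _).2 h2
  have hsq : ∀ i, s i ^ 2 ∈ (algebraMap (RatFunc k) (AlgebraicClosure (RatFunc k))).fieldRange :=
    fun i => by
      rw [hs]
      exact mul_mem (inv_mem (amap_mem_fieldRange _)) (pow_mem (amap_mem_fieldRange _) 3)
  refine (forall_mul_mem_or_exists_perm_add_eq_zero h2' hsq hsum).resolve_right ?_ i j
  rintro ⟨hs0, σ, h⟩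
  refine hord ⟨fun l hl => hs0 l ?_, σ, s ∘ σ, fun l => hs (σ l), h⟩
  rw [← sq_eq_zero_iff, hs, hl]
  simp [amap]

/- At `c = 0` this holds because `s = 0` too. -/
lemma mul_div_sq_and_cube_eq {K : Type*} [Field K] {s f c : K} (hf : f ≠ 0)
    (hs : s ^ 2 = f⁻¹ * c ^ 3) :
    (s * (f / c)) ^ 2 = f * c ∧ (s * (f / c)) ^ 3 = s * f ^ 2 := by
  rcases eq_or_ne c 0 with rfl | hc
  · simp_all
  · have hsq : (s * (f / c)) ^ 2 = f * c := by
      rw [mul_pow, hs]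
      field_simp
    exact ⟨hsq, by rw [pow_succ, hsq]; field_simp⟩

theorem exists_parametrization_of_dualZero (h2 : (2 : k) ≠ 0) {F c : Fin 4 → k[X]}
    (hF : ∀ i, F i ≠ 0) (hzero : DualZero k F c) (hord : ¬ SpecialSolution k F c) :
    ∃ (d : k[X]) (e : Fin 4 → k[X]),
      d ≠ 0 ∧ (∀ i, F i * c i = d * e i ^ 2) ∧ ∑ i, dualCoeff F i * e i ^ 3 = 0 := by
  obtain ⟨s, hs, hsum⟩ := hzero
  set φ := algebraMap k[X] (AlgebraicClosure (RatFunc k))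
  have hφ : amap k = φ := amap_eq_algebraMap
  have hinj : Function.Injective φ := hφ ▸ amap_injective
  set r := fun i => s i * (φ (F i) / φ (c i)) with hr_def
  have hr : ∀ i, r i ^ 2 = φ (F i * c i) ∧ r i ^ 3 = s i * φ (F i) ^ 2 := fun i => by
    rw [map_mul]
    exact mul_div_sq_and_cube_eq ((map_ne_zero_iff φ hinj).2 (hF i)) (hφ ▸ hs i)
  have hmul : ∀ i j,
      r i * r j ∈ (algebraMap (RatFunc k) (AlgebraicClosure (RatFunc k))).fieldRange := by
    intro i j
    rw [hr_def, mul_mul_mul_comm, ← hφ]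
    exact mul_mem (mul_mem_fieldRange_of_not_specialSolution h2 hs hsum hord i j)
      (mul_mem (div_mem (amap_mem_fieldRange _) (amap_mem_fieldRange _))
        (div_mem (amap_mem_fieldRange _) (amap_mem_fieldRange _)))
  obtain ⟨d, ρ, e, hρ0, hρ, he⟩ := exists_forall_eq_algebraMap_mul (fun i => (hr i).1) hmul
  refine ⟨d, e, ?_, fun i => hinj ?_, hinj ?_⟩
  · rintro rfl
    simp_all
  · rw [← (hr i).1, he, mul_pow, hρ, map_mul, map_pow, mul_comm]
  · refine mul_right_cancel₀ (pow_ne_zero 3 hρ0) ?_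
    calc φ (∑ i, dualCoeff F i * e i ^ 3) * ρ ^ 3
        = ∑ i, φ (dualCoeff F i) * (φ (e i) * ρ) ^ 3 := by
          simp only [map_sum, map_mul, map_pow, sum_mul, mul_pow, mul_assoc]
      _ = ∑ i, φ (dualCoeff F i * F i ^ 2) * s i := by
          refine sum_congr rfl fun i _ => ?_
          rw [← he, (hr i).2, map_mul, map_pow]
          ring
      _ = φ 0 * ρ ^ 3 := by
          simp only [dualCoeff_mul_sq]
          rw [← mul_sum, hsum, mul_zero, map_zero, zero_mul]

end DualForm

section SquareMultiples

open Finset Polynomial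

variable {k : Type*} [Field k] [Fintype k]

/-- The vectors `(d eᵢ²)ᵢ` with `e` a zero of `∑ aᵢ xᵢ³`, cut down to a finite set which still
contains all those of degree at most `N`: the degree of `d` is bounded by `D ≤ N` and those of the
`eᵢ` by `(N - D) / 2`. -/
def squareMultiples (a : Fin 4 → k[X]) (N : ℕ) : Finset (Fin 4 → k[X]) :=
  (range (N + 1)).biUnion fun D =>
    image₂ (fun d e i => d * e i ^ 2) (natDegreeLE k D) (cubicZeros a ((N - D) / 2))

lemma mem_squareMultiples {a e : Fin 4 → k[X]} {d : k[X]} {N : ℕ} (hd : d ≠ 0)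
    (he : ∑ i, a i * e i ^ 3 = 0) (hdeg : ∀ i, (d * e i ^ 2).natDegree ≤ N) :
    (fun i => d * e i ^ 2) ∈ squareMultiples a N := by
  rw [squareMultiples, mem_biUnion]
  by_cases h0 : ∀ i, e i = 0
  · refine ⟨0, by simp, mem_image₂.2 ⟨1, ?_, 0, ?_, ?_⟩⟩
    · simp [mem_natDegreeLE]
    · simp [mem_cubicZeros]
    · simp [h0]
  · obtain ⟨j, hj⟩ := not_forall.1 h0
    have hsum : ∀ i, e i ≠ 0 → d.natDegree + 2 * (e i).natDegree ≤ N := fun i hi => by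
      simpa only [natDegree_mul hd (pow_ne_zero 2 hi), natDegree_pow] using hdeg i
    refine ⟨d.natDegree, ?_, mem_image₂_of_mem (mem_natDegreeLE.2 le_rfl)
      (mem_cubicZeros.2 ⟨fun i => ?_, he⟩)⟩
    · have := hsum j hj
      exact mem_range.2 (by lia)
    · rcases eq_or_ne (e i) 0 with hi | hi
      · simp [hi]
      · have := hsum i hi
        lia

lemma card_squareMultiples_le (a : Fin 4 → k[X]) (N : ℕ) :
    #(squareMultiples a N) ≤
      ∑ D ∈ range (N + 1), #(natDegreeLE k D) * #(cubicZeros a ((N - D) / 2)) := by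
  rw [squareMultiples]
  exact card_biUnion_le.trans (sum_le_sum fun D _ => card_image₂_le _ _ _)

theorem exists_card_squareMultiples_le (h3 : (3 : k) ≠ 0) {a : Fin 4 → k[X]}
    (ha : ∀ i, a i ≠ 0) {θ : ℝ} (hθ : 1 < θ) :
    ∃ K : ℝ, 0 < K ∧ ∀ N : ℕ,
      (#(squareMultiples a N) : ℝ) ≤ K * (Fintype.card k : ℝ) ^ N * θ ^ N := by
  obtain ⟨η, hη, rfl⟩ := exists_one_lt_pow_eq hθ two_ne_zero
  obtain ⟨K, hK, hzeros⟩ := exists_card_cubicZeros_le h3 ha hη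
  obtain ⟨A, hA, hlin⟩ := exists_forall_add_one_le_mul_pow hη
  set q := Fintype.card k
  have hq : (1 : ℝ) ≤ q := by exact_mod_cast Fintype.card_pos
  refine ⟨A * K * q, by positivity, fun N => ?_⟩
  have hterm : ∀ D ∈ range (N + 1), (#(natDegreeLE k D) : ℝ) * #(cubicZeros a ((N - D) / 2)) ≤
      K * (q : ℝ) ^ (N + 1) * η ^ N := by
    intro D hD
    have hDN : D + 1 + 2 * ((N - D) / 2) ≤ N + 1 := by
      have := mem_range.1 hD
      lia
    calc (#(natDegreeLE k D) : ℝ) * #(cubicZeros a ((N - D) / 2))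
        ≤ (q : ℝ) ^ (D + 1) * (K * (q : ℝ) ^ (2 * ((N - D) / 2)) * η ^ ((N - D) / 2)) := by
          rw [card_natDegreeLE, Nat.cast_pow]
          gcongr
          exact hzeros _
      _ = K * (q : ℝ) ^ (D + 1 + 2 * ((N - D) / 2)) * η ^ ((N - D) / 2) := by ring
      _ ≤ K * (q : ℝ) ^ (N + 1) * η ^ N := by
          gcongr
          · exact hη.le
          · lia
  calc (#(squareMultiples a N) : ℝ)
      ≤ ∑ D ∈ range (N + 1), (#(natDegreeLE k D) : ℝ) * #(cubicZeros a ((N - D) / 2)) := by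
        exact_mod_cast card_squareMultiples_le a N
    _ ≤ (N + 1) * (K * (q : ℝ) ^ (N + 1) * η ^ N) := by
        simpa using sum_le_card_nsmul _ _ _ hterm
    _ ≤ A * η ^ N * (K * (q : ℝ) ^ (N + 1) * η ^ N) := by
        gcongr
        exact hlin N
    _ = A * K * q * (q : ℝ) ^ N * (η ^ 2) ^ N := by ring

end SquareMultiples

section OrdinaryZeros

open Finset Polynomial

variable {k : Type} [Field k] [Fintype k]

lemma natDegree_le_of_fabsP_le {x : k[X]} {C : ℕ}
    (hx : fabsP k x ≤ (Fintype.card k : ℝ) ^ C) : x.natDegree ≤ C := by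
  rcases eq_or_ne x 0 with rfl | hx0
  · simp
  · rw [fabsP, if_neg hx0] at hx
    exact (pow_le_pow_iff_right₀ (by exact_mod_cast Fintype.one_lt_card)).1 hx

theorem card_ordinary_dualZero_le (h2 : (2 : k) ≠ 0) {F : Fin 4 → k[X]} (hF : ∀ i, F i ≠ 0)
    (C : ℕ) :
    Nat.card {c : Fin 4 → k[X] // (∀ i, fabsP k (c i) ≤ (Fintype.card k : ℝ) ^ C) ∧
        DualZero k F c ∧ ¬ SpecialSolution k F c} ≤
      #(squareMultiples (dualCoeff F) (∑ i, (F i).natDegree + C)) := by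
  rw [← Nat.card_eq_finsetCard]
  refine Nat.card_le_card_of_injective (fun c => ⟨fun i => F i * c.1 i, ?_⟩) ?_
  · obtain ⟨c, hheight, hzero, hord⟩ := c
    obtain ⟨d, e, hd, he, hcubic⟩ := exists_parametrization_of_dualZero h2 hF hzero hord
    have hdeg : ∀ i, (d * e i ^ 2).natDegree ≤ ∑ i, (F i).natDegree + C := fun i =>
      he i ▸ natDegree_mul_le_of_le
        (single_le_sum (f := fun i => (F i).natDegree) (fun _ _ => Nat.zero_le _) (mem_univ i))
        (natDegree_le_of_fabsP_le (hheight i))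
    simpa only [he] using mem_squareMultiples hd hcubic hdeg
  · intro c c' h
    ext1
    funext i
    exact mul_left_cancel₀ (hF i) (congrFun (congrArg Subtype.val h) i)

lemma natCast_ne_zero_of_lt_ringChar {R : Type*} [NonAssocSemiring R] {n : ℕ} (hn : n ≠ 0)
    (h : n < ringChar R) : (n : R) ≠ 0 := fun h0 =>
  (Nat.le_of_dvd (Nat.pos_of_ne_zero hn) (ringChar.dvd h0)).not_gt h

end OrdinaryZeros

/-- For a non-singular diagonal cubic in 4 variables over `F_q[t]` with
`char F_q(t) > 3`, the number of ordinary (i.e. non-special) zeros of the dual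
form of height at most `Ĉ = q^C` is `O_ε(Ĉ^{1+ε})`. -/
theorem ordinary_dual_zero_count_four_variables
    (hchar : 3 < ringChar Fq)
    (F : Fin 4 → Polynomial Fq) (hF : ∀ i, F i ≠ 0)
    (ε : ℝ) (hε : 0 < ε) :
    ∃ K : ℝ, 0 < K ∧ ∀ Cexp : ℕ,
      (Nat.card {c : Fin 4 → Polynomial Fq //
          (∀ i, fabsP Fq (c i) ≤ (Fintype.card Fq : ℝ) ^ Cexp) ∧
          DualZero Fq F c ∧ ¬ SpecialSolution Fq F c} : ℝ)
        ≤ K * ((Fintype.card Fq : ℝ) ^ Cexp) ^ ((1 : ℝ) + ε) := by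
  have h2 : (2 : Fq) ≠ 0 := natCast_ne_zero_of_lt_ringChar two_ne_zero (by lia)
  have h3 : (3 : Fq) ≠ 0 := natCast_ne_zero_of_lt_ringChar three_ne_zero hchar
  have hq : (1 : ℝ) < Fintype.card Fq := by exact_mod_cast Fintype.one_lt_card
  set q : ℝ := (Fintype.card Fq : ℝ)
  obtain ⟨K, hK, hcount⟩ := exists_card_squareMultiples_le h3 (dualCoeff_ne_zero hF)
    (Real.one_lt_rpow hq hε)
  set f := ∑ i, (F i).natDegree
  refine ⟨K * (q * q ^ ε) ^ f, by positivity, fun C => ?_⟩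
  calc _ ≤ K * q ^ (f + C) * (q ^ ε) ^ (f + C) :=
        (Nat.cast_le.2 (card_ordinary_dualZero_le h2 hF C)).trans (hcount _)
    _ = K * (q * q ^ ε) ^ f * (q * q ^ ε) ^ C := by ring
    _ = K * (q * q ^ ε) ^ f * (q ^ C) ^ (1 + ε) := by
        rw [← Real.rpow_pow_comm (by positivity), Real.rpow_add (by positivity), Real.rpow_one]
end
end
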